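/- Let $s\ge 1$, let $U\subset\mathbb{R}^s$ be convex, open and bounded, and let $\mathbb{U}$ be a probability measure on $U$ with a density $f_{\mathbb{U}}:U\to[0,C'_{\mathbb{U}}]$ with respect to Lebesgue measure, for some $C'_{\mathbb{U}}>0$. For $\nu,\eta,l>0$ let $$k_{\nu,\eta,l}(u,v)=\frac{\eta}{\Gamma(\nu)2^{\nu-1}}\Big(\frac{\sqrt{2\nu}\,\|u-v\|_2}{l}\Big)^{\nu}K_\nu\Big(\frac{\sqrt{2\nu}\,\|u-v\|_2}{l}\Big)\quad(u\ne v),\qquad k_{\nu,\eta,l}(u,u)=\eta,$$ be the Matérn kernel of order $\nu$ with amplitude $\eta$ and lengthscale $l$, where $K_\nu$ is the modified Bessel function of the second kind. Let $\nu_c>0$, and for every $\beta$ in a parameter space $B$ let $c_\beta=k_{\nu_c,\eta_\beta,l_\beta}$ be a Matérn kernel on $U$ of the same order $\nu_c$, where the amplitudes and lengthscales satisfy $0<\eta_\beta\le\eta_{\max}$ and $0<l_{\min}\le l_\beta\le l_{\max}$ for all $\beta\in B$, with constants $\eta_{\max},l_{\min},l_{\max}$ independent of $\beta$. Let $M\ge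 1$, and for every integer $m\ge M$ let $u_1,\dots,u_m\in U$ be pairwise distinct points (which may depend on $m$) whose fill distance satisfies $$h_m=\sup_{u\in U}\min_{1\le i\le m}\|u-u_i\|_2=O(m^{-1/s})\quad(m\to\infty),$$ let $\beta_m\in B$, and let $w=(w_1,\dots,w_m)=C^{-1}z$ be the optimal weights of the kernel $c_{\beta_m}$ and the measure $\mathbb{U}$, where $C_{ij}=c_{\beta_m}(u_i,u_j)$ and $z_i=\int_U c_{\beta_m}(u_i,u)\,d\mathbb{U}(u)$. Then there is a constant $C_0$, independent of $m$, $\beta$ and $f$, such that for every $m\ge M$, every $\beta\in B$ (in particular $\beta=\beta_m$) and every $f$ in the reproducing kernel Hilbert space $\mathcal{H}_{c_\beta}$ of $c_\beta$ on $U$ with $\|f\|_{\mathcal{H}_{c_\beta}}=1$, the function $f$ is $\mathbb{U}$-integrable and $$\Big|\int_U f(u)\,d\mathbb{U}(u)-\sum_{i=1}^m w_i f(u_i)\Big|\le C_0\,m^{-\nu_c/s-1/2}.$$ -/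

import Mathlib

open MeasureTheory Asymptotics Filter

/-- The modified Bessel function of the second kind `K_ν(x)`, for `x > 0`, by the classical formula
`K_ν(x) = ∫₀^∞ exp(-x cosh t) cosh(ν t) dt`. -/
noncomputable def besselK (ν x : ℝ) : ℝ :=
  ∫ t in Set.Ioi (0 : ℝ), Real.exp (-(x * Real.cosh t)) * Real.cosh (ν * t)

open scoped Classical in
/-- The Matérn kernel of order `ν > 0` with amplitude `η > 0` and lengthscale `l > 0`. On the
diagonal, where the formula reads `0 * ∞`, it takes its limit value `η`. -/
noncomputable def maternKernel {s : ℕ} (ν η l : ℝ) (x y : EuclideanSpace ℝ (Fin s)) : ℝ :=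
  if x = y then η
  else (η / (Real.Gamma ν * (2 : ℝ) ^ (ν - 1))) *
    (Real.sqrt (2 * ν) * ‖x - y‖ / l) ^ ν * besselK ν (Real.sqrt (2 * ν) * ‖x - y‖ / l)

/-- The Matérn kernel as a kernel on a subset `U` of `ℝˢ`. -/
noncomputable def maternKernelOn {s : ℕ} (U : Set (EuclideanSpace ℝ (Fin s))) (ν η l : ℝ)
    (x y : U) : ℝ :=
  maternKernel ν η l (x : EuclideanSpace ℝ (Fin s)) (y : EuclideanSpace ℝ (Fin s))

/-- The real reproducing kernel Hilbert space `H` of functions on `X` is the one of the kernel `c`.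
(Mathlib's kernel has values in the operators on the scalars `ℝ`; evaluating at `1` gives the
scalar kernel.) -/
def HasReproducingKernel {X : Type*} (H : Type*) [NormedAddCommGroup H] [InnerProductSpace ℝ H]
    [CompleteSpace H] [RKHS ℝ H X ℝ] (c : X → X → ℝ) : Prop :=
  ∀ x y : X, RKHS.kernel H x y (1 : ℝ) = c x y

/-- The fill distance `sup_{v ∈ U} min_i ‖v - u_i‖` of finitely many points `u_i` of `U`. -/
noncomputable def fillDistance {s m : ℕ} (U : Set (EuclideanSpace ℝ (Fin s)))
    (u : Fin m → U) : ℝ :=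
  ⨆ v : U, ⨅ i : Fin m,
    ‖(v : EuclideanSpace ℝ (Fin s)) - (u i : EuclideanSpace ℝ (Fin s))‖

/-- The optimal quadrature weights `C⁻¹ z`, where `C i j = c (u i) (u j)` and
`z i = ∫ c (u i) v d𝕌(v)`. -/
noncomputable def optimalWeights {X : Type*} [MeasurableSpace X] {m : ℕ} (c : X → X → ℝ)
    (𝕌 : Measure X) (u : Fin m → X) : Fin m → ℝ :=
  (Matrix.of fun i j => c (u i) (u j))⁻¹.mulVec fun i => ∫ v, c (u i) v ∂𝕌

open ProbabilityTheory in
/-- Integrals against the gamma distribution in terms of its density. -/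
lemma integral_gammaMeasure {ν a : ℝ} (hν : 0 < ν) (ha : 0 < a) (f : ℝ → ℝ) :
    ∫ σ, f σ ∂(gammaMeasure ν a) =
      ∫ σ in Set.Ioi (0 : ℝ),
        a ^ ν / Real.Gamma ν * σ ^ (ν - 1) * Real.exp (-(a * σ)) * f σ := by
  have h1 : ∫ σ, f σ ∂(gammaMeasure ν a) = ∫ σ, gammaPDFReal ν a σ * f σ := by
    rw [gammaMeasure, integral_withDensity_eq_integral_toReal_smul]
    · refine integral_congr_ae (ae_of_all _ fun σ => ?_)
      simp [gammaPDF, ENNReal.toReal_ofReal (gammaPDFReal_nonneg hν ha σ)]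
    · exact (measurable_gammaPDFReal ν a).ennreal_ofReal
    · exact ae_of_all _ fun σ => by simp [gammaPDF]
  rw [h1, ← integral_Ici_eq_integral_Ioi, ← integral_indicator measurableSet_Ici]
  refine integral_congr_ae (ae_of_all _ fun σ => ?_)
  by_cases h : 0 ≤ σ <;> simp [gammaPDFReal, Set.indicator, h]

open ProbabilityTheory in
lemma ae_pos_gammaMeasure {ν a : ℝ} : ∀ᵐ σ ∂(gammaMeasure ν a), 0 < σ := by
  have : {σ : ℝ | ¬ 0 < σ} = Set.Iic 0 := by ext; simp
  rw [ae_iff, this, gammaMeasure, withDensity_apply _ measurableSet_Iic,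
    ← setLIntegral_congr (Iio_ae_eq_Iic (a := (0 : ℝ)) (μ := volume))]
  exact lintegral_gammaPDF_of_nonpos le_rfl

lemma integrableOn_rpow_mul_exp_mul {ν a : ℝ} (hν : 0 < ν) (ha : 0 < a) {f : ℝ → ℝ}
    (hf : Measurable f) (hf1 : ∀ σ, 0 < σ → |f σ| ≤ 1) :
    IntegrableOn (fun σ : ℝ => σ ^ (ν - 1) * Real.exp (-(a * σ)) * f σ) (Set.Ioi 0) := by
  have h0 : IntegrableOn (fun σ : ℝ => σ ^ (ν - 1) * Real.exp (-a * σ)) (Set.Ioi 0) := by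
    have := integrableOn_rpow_mul_exp_neg_mul_rpow (s := ν - 1) (p := 1) (b := a)
      (by linarith) one_pos ha
    simpa using this
  refine Integrable.mono h0 (by fun_prop) ?_
  filter_upwards [ae_restrict_mem measurableSet_Ioi] with σ hσ
  simp only [Set.mem_Ioi] at hσ
  rw [norm_mul, neg_mul]
  exact mul_le_of_le_one_right (norm_nonneg _) (hf1 σ hσ)

/-- The modified Bessel function of the second kind as an integral over the half-line with an
algebraic weight. -/
lemma besselK_eq_integral_rpow {ν a r : ℝ} (hν : 0 < ν) (ha : 0 < a) (hr : 0 < r) :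
    besselK ν (2 * Real.sqrt a * r) = 1 / 2 * (r / Real.sqrt a) ^ (-ν) *
      ∫ σ in Set.Ioi (0 : ℝ), σ ^ (ν - 1) * Real.exp (-(a * σ)) * Real.exp (-(r ^ 2 / σ)) := by
  set q := Real.sqrt a with hq
  have hq0 : 0 < q := Real.sqrt_pos.2 ha
  have hqa : a = q ^ 2 := (Real.sq_sqrt ha.le).symm
  set c := r / q with hc
  have hc0 : 0 < c := by positivity
  set F : ℝ → ℝ := fun σ => σ ^ (ν - 1) * Real.exp (-(a * σ)) * Real.exp (-(r ^ 2 / σ)) with hF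
  set g : ℝ → ℝ := fun t => Real.exp (-(2 * q * r * Real.cosh t)) * Real.exp (ν * t) with hg
  have hFint : IntegrableOn F (Set.Ioi 0) := by
    refine integrableOn_rpow_mul_exp_mul hν ha (by fun_prop) fun σ hσ => ?_
    rw [abs_of_pos (Real.exp_pos _), Real.exp_le_one_iff]
    have : 0 ≤ r ^ 2 / σ := by positivity
    linarith
  have himg : (fun t => c * Real.exp t) '' Set.univ = Set.Ioi 0 := by
    ext y
    simp only [Set.image_univ, Set.mem_range, Set.mem_Ioi]
    constructor
    · rintro ⟨t, rfl⟩; positivity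
    · intro hy
      exact ⟨Real.log (y / c), by rw [Real.exp_log (by positivity)]; field_simp⟩
  have hder : ∀ t ∈ (Set.univ : Set ℝ),
      HasDerivWithinAt (fun t => c * Real.exp t) (c * Real.exp t) Set.univ t := fun t _ =>
    ((Real.hasDerivAt_exp t).const_mul c).hasDerivWithinAt
  have hinj : Set.InjOn (fun t => c * Real.exp t) Set.univ := by
    intro t _ t' _ h
    exact Real.exp_injective (mul_left_cancel₀ hc0.ne' h)
  have hpt : ∀ t, |c * Real.exp t| • F (c * Real.exp t) = c ^ ν * g t := by
    intro t
    have h1 : 0 < c * Real.exp t := by positivity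
    rw [abs_of_pos h1, smul_eq_mul, hF, hg]
    simp only
    have h2 : a * (c * Real.exp t) + r ^ 2 / (c * Real.exp t) = 2 * q * r * Real.cosh t := by
      rw [hqa, hc, Real.cosh_eq, Real.exp_neg]
      field_simp
    have h3 : c * Real.exp t * (c * Real.exp t) ^ (ν - 1) = c ^ ν * Real.exp (ν * t) := by
      rw [Real.rpow_sub_one h1.ne', mul_div_cancel₀ _ h1.ne',
        Real.mul_rpow hc0.le (Real.exp_pos t).le, ← Real.exp_mul, mul_comm t]
    rw [mul_assoc ((c * Real.exp t) ^ (ν - 1)), ← Real.exp_add, ← neg_add, h2, ← mul_assoc, h3]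
    ring
  have hint : Integrable g := by
    have := (integrableOn_image_iff_integrableOn_abs_deriv_smul MeasurableSet.univ hder hinj F).1
      (by rwa [himg])
    simp only [hpt] at this
    rw [integrableOn_univ] at this
    have h4 := this.const_mul (c ^ ν)⁻¹
    have h5 : c ^ ν ≠ 0 := (Real.rpow_pos_of_pos hc0 ν).ne'
    simpa [← mul_assoc, inv_mul_cancel₀ h5] using h4
  have hcv : ∫ σ in Set.Ioi (0 : ℝ), F σ = c ^ ν * ∫ t, g t := by
    rw [← himg, integral_image_eq_integral_abs_deriv_smul MeasurableSet.univ hder hinj F]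
    simp only [hpt]
    rw [setIntegral_univ, integral_const_mul]
  have hsplit : ∫ t, g t = 2 * besselK ν (2 * q * r) := by
    have h1 : ∫ t in Set.Ioi (0 : ℝ), g (-t) = ∫ t in Set.Iic (0 : ℝ), g t := by
      simp
    have hint' : Integrable fun t => g (-t) := hint.comp_neg
    rw [← intervalIntegral.integral_Iic_add_Ioi (b := (0 : ℝ)) hint.integrableOn hint.integrableOn,
      ← h1, ← integral_add hint'.integrableOn hint.integrableOn, besselK, ← integral_const_mul]
    refine integral_congr_ae (ae_of_all _ fun t => ?_)
    simp only [hg, Real.cosh_neg, Real.cosh_eq (ν * t)]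
    rw [mul_neg]
    ring
  rw [hcv, hsplit, Real.rpow_neg hc0.le]
  have h5 : c ^ ν ≠ 0 := (Real.rpow_pos_of_pos hc0 ν).ne'
  field_simp

/-- The Gaussian kernel of squared width `σ`. -/
noncomputable def gaussKernel {E : Type*} [NormedAddCommGroup E] (σ : ℝ) (x y : E) : ℝ :=
  Real.exp (-(‖x - y‖ ^ 2 / σ))

/-- The gamma mixture of Gaussian kernels: the Matérn kernel of unit amplitude. -/
noncomputable def gammaMixKernel {E : Type*} [NormedAddCommGroup E] (ν a : ℝ) (x y : E) : ℝ :=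
  ∫ σ, gaussKernel σ x y ∂(ProbabilityTheory.gammaMeasure ν a)

lemma maternKernel_eq_gammaMixKernel {s : ℕ} {ν η l : ℝ} (hν : 0 < ν) (hl : 0 < l)
    (x y : EuclideanSpace ℝ (Fin s)) :
    maternKernel ν η l x y = η * gammaMixKernel ν (ν / (2 * l ^ 2)) x y := by
  have ha : 0 < ν / (2 * l ^ 2) := by positivity
  by_cases hxy : x = y
  · have := ProbabilityTheory.isProbabilityMeasure_gammaMeasure hν ha
    simp [maternKernel, hxy, gammaMixKernel, gaussKernel]
  · have hr : 0 < ‖x - y‖ := norm_pos_iff.2 (sub_ne_zero.2 hxy)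
    set r := ‖x - y‖ with hrdef
    set a := ν / (2 * l ^ 2) with hadef
    have hx : Real.sqrt (2 * ν) * r / l = 2 * Real.sqrt a * r := by
      have : Real.sqrt a = Real.sqrt (2 * ν) / (2 * l) := by
        rw [hadef, Real.sqrt_eq_iff_mul_self_eq (by positivity) (by positivity)]
        have := Real.mul_self_sqrt (show 0 ≤ 2 * ν by positivity)
        field_simp
        rw [Real.sq_sqrt (by positivity)]
      rw [this]
      field_simp
    rw [maternKernel, if_neg hxy, ← hrdef, hx, besselK_eq_integral_rpow hν ha hr, gammaMixKernel,
      integral_gammaMeasure hν ha]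
    simp only [gaussKernel, ← hrdef, mul_assoc]
    rw [integral_const_mul]
    set I := ∫ σ in Set.Ioi (0 : ℝ),
      σ ^ (ν - 1) * (Real.exp (-(a * σ)) * Real.exp (-(r ^ 2 / σ)))
    have hq0 : 0 < Real.sqrt a := Real.sqrt_pos.2 ha
    have e1 : (2 * (Real.sqrt a * r)) ^ ν = 2 ^ ν * (Real.sqrt a ^ ν * r ^ ν) := by
      rw [Real.mul_rpow (by norm_num) (by positivity), Real.mul_rpow hq0.le hr.le]
    have e2 : (r / Real.sqrt a) ^ (-ν) = Real.sqrt a ^ ν / r ^ ν := by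
      rw [Real.rpow_neg (by positivity), Real.div_rpow hr.le hq0.le, inv_div]
    have e3 : a ^ ν = Real.sqrt a ^ ν * Real.sqrt a ^ ν := by
      rw [← Real.mul_rpow hq0.le hq0.le, Real.mul_self_sqrt ha.le]
    have e4 : (2 : ℝ) ^ (ν - 1) = 2 ^ ν / 2 := Real.rpow_sub_one (by norm_num) ν
    have p1 := Real.rpow_pos_of_pos hr ν
    have p2 : (0 : ℝ) < 2 ^ ν := Real.rpow_pos_of_pos (by norm_num) ν
    have p3 := Real.Gamma_pos_of_pos hν
    rw [e1, e2, e3, e4]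
    field_simp

section QuadErr

variable {X Ω ι : Type*} [MeasurableSpace X] [MeasurableSpace Ω] [Fintype ι]

/-- The error functional of the quadrature rule with weights `w` and nodes `u` for `P`. -/
noncomputable def quadErr (P : Measure X) (w : ι → ℝ) (u : ι → X) (g : X → ℝ) : ℝ :=
  ∫ x, g x ∂P - ∑ i, w i * g (u i)

/-- The error functional applied to both arguments of a kernel. -/
noncomputable def quadEnergy (P : Measure X) (w : ι → ℝ) (u : ι → X) (F : X → X → ℝ) : ℝ :=
  quadErr P w u fun x => quadErr P w u fun y => F x y

variable (P : Measure X) (w : ι → ℝ) (u : ι → X)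

lemma quadErr_const_mul (c : ℝ) (g : X → ℝ) :
    quadErr P w u (fun x => c * g x) = c * quadErr P w u g := by
  simp only [quadErr, integral_const_mul, mul_sub, Finset.mul_sum]
  congr 1
  exact Finset.sum_congr rfl fun i _ => by ring

lemma quadErr_mul_const (c : ℝ) (g : X → ℝ) :
    quadErr P w u (fun x => g x * c) = quadErr P w u g * c := by
  simp only [mul_comm _ c, quadErr_const_mul]

variable {P} in
lemma quadErr_add {f g : X → ℝ} (hf : Integrable f P) (hg : Integrable g P) :
    quadErr P w u (fun x => f x + g x) = quadErr P w u f + quadErr P w u g := by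
  simp only [quadErr, integral_add hf hg, mul_add, Finset.sum_add_distrib]
  ring

variable {P} in
lemma quadErr_sub {f g : X → ℝ} (hf : Integrable f P) (hg : Integrable g P) :
    quadErr P w u (fun x => f x - g x) = quadErr P w u f - quadErr P w u g := by
  simp only [quadErr, integral_sub hf hg, mul_sub, Finset.sum_sub_distrib]
  ring

variable {P} in
lemma quadErr_finsetSum {κ : Type*} (s : Finset κ) {f : κ → X → ℝ}
    (hf : ∀ k ∈ s, Integrable (f k) P) :
    quadErr P w u (fun x => ∑ k ∈ s, f k x) = ∑ k ∈ s, quadErr P w u (f k) := by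
  simp only [quadErr, integral_finsetSum s hf, Finset.mul_sum, Finset.sum_sub_distrib]
  rw [Finset.sum_comm]

lemma abs_quadErr_le [IsFiniteMeasure P] {g : X → ℝ} {A : ℝ} (hP : ∀ᵐ x ∂P, |g x| ≤ A)
    (hu : ∀ i, w i ≠ 0 → |g (u i)| ≤ A) :
    |quadErr P w u g| ≤ (P.real Set.univ + ∑ i, |w i|) * A := by
  have h1 : |∫ x, g x ∂P| ≤ A * P.real Set.univ := by
    simpa using norm_integral_le_of_norm_le_const (f := g) (C := A) (by simpa using hP)
  have h2 : |∑ i, w i * g (u i)| ≤ ∑ i, |w i| * A := by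
    refine (Finset.abs_sum_le_sum_abs _ _).trans (Finset.sum_le_sum fun i _ => ?_)
    rw [abs_mul]
    by_cases hi : w i = 0
    · simp [hi]
    · exact mul_le_mul_of_nonneg_left (hu i hi) (abs_nonneg _)
  rw [← Finset.sum_mul] at h2
  calc |quadErr P w u g| ≤ |∫ x, g x ∂P| + |∑ i, w i * g (u i)| := abs_sub _ _
    _ ≤ _ := by linarith

lemma measurable_quadErr [SFinite P] {g : Ω → X → ℝ} (hg : Measurable (Function.uncurry g)) :
    Measurable fun ω => quadErr P w u (g ω) := by
  unfold quadErr
  have h1 : Measurable fun ω => ∫ x, g ω x ∂P :=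
    hg.stronglyMeasurable.integral_prod_right.measurable
  have h2 : ∀ i, Measurable fun ω => g ω (u i) := fun i =>
    hg.comp (measurable_id.prodMk measurable_const)
  exact h1.sub (Finset.measurable_sum _ fun i _ => (h2 i).const_mul _)

lemma integrable_of_measurable_of_bound [IsFiniteMeasure P] {g : X → ℝ} (hg : Measurable g) {A : ℝ}
    (hA : ∀ x, |g x| ≤ A) : Integrable g P :=
  Integrable.of_bound hg.aestronglyMeasurable A (ae_of_all _ hA)

variable {τ : Measure Ω}

lemma quadErr_integral_comm [SFinite τ] [IsFiniteMeasure P] {g : Ω → X → ℝ}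
    (hg : Measurable (Function.uncurry g)) {b : Ω → ℝ} (hb : Integrable b τ)
    (hgb : ∀ᵐ ω ∂τ, ∀ x, |g ω x| ≤ b ω) :
    quadErr P w u (fun x => ∫ ω, g ω x ∂τ) = ∫ ω, quadErr P w u (g ω) ∂τ := by
  have h1 : Integrable (Function.uncurry g) (τ.prod P) := by
    refine Integrable.mono' (hb.comp_fst P) hg.aestronglyMeasurable ?_
    have h := (Measure.quasiMeasurePreserving_fst (μ := τ) (ν := P)).ae hgb
    filter_upwards [h] with p hp using hp p.2
  have h2 : ∀ x, Integrable (fun ω => g ω x) τ := fun x => by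
    refine Integrable.mono' hb
      (hg.comp (measurable_id.prodMk measurable_const)).aestronglyMeasurable ?_
    filter_upwards [hgb] with ω hω using hω x
  have h3 : Integrable (fun ω => ∫ x, g ω x ∂P) τ := h1.integral_prod_left
  unfold quadErr
  rw [integral_sub h3 (integrable_finsetSum _ fun i _ => (h2 (u i)).const_mul (w i)),
    integral_finsetSum _ fun i _ => (h2 (u i)).const_mul (w i), integral_integral_swap h1]
  simp only [integral_const_mul]

lemma ae_abs_quadErr_le [IsFiniteMeasure P] {Y : Type*} {g : Ω → Y → X → ℝ} {b : Ω → ℝ}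
    (hgb : ∀ᵐ ω ∂τ, ∀ y x, |g ω y x| ≤ b ω) :
    ∀ᵐ ω ∂τ, ∀ y, |quadErr P w u (g ω y)| ≤ (P.real Set.univ + ∑ i, |w i|) * b ω := by
  filter_upwards [hgb] with ω hω y
  exact abs_quadErr_le P w u (ae_of_all _ (hω y)) fun i _ => hω y _

lemma quadEnergy_integral_comm [SFinite τ] [IsFiniteMeasure P] {F : Ω → X → X → ℝ}
    (hF : Measurable fun p : (Ω × X) × X => F p.1.1 p.1.2 p.2) {b : Ω → ℝ} (hb : Integrable b τ)
    (hFb : ∀ᵐ ω ∂τ, ∀ x y, |F ω x y| ≤ b ω) :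
    quadEnergy P w u (fun x y => ∫ ω, F ω x y ∂τ) = ∫ ω, quadEnergy P w u (F ω) ∂τ := by
  unfold quadEnergy
  have h1 : ∀ x, quadErr P w u (fun y => ∫ ω, F ω x y ∂τ) = ∫ ω, quadErr P w u (F ω x) ∂τ :=
    fun x => quadErr_integral_comm P w u
      (hF.comp ((measurable_fst.prodMk measurable_const).prodMk measurable_snd)) hb
      (by filter_upwards [hFb] with ω h y using h x y)
  simp only [h1]
  have hm : Measurable (Function.uncurry fun (ω : Ω) (x : X) => quadErr P w u (F ω x)) :=
    measurable_quadErr P w u (g := fun (p : Ω × X) y => F p.1 p.2 y) hF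
  exact quadErr_integral_comm P w u hm (hb.const_mul _) (ae_abs_quadErr_le P w u hFb)

lemma integrable_quadEnergy [SFinite τ] [IsFiniteMeasure P] {F : Ω → X → X → ℝ}
    (hF : Measurable fun p : (Ω × X) × X => F p.1.1 p.1.2 p.2) {b : Ω → ℝ} (hb : Integrable b τ)
    (hFb : ∀ᵐ ω ∂τ, ∀ x y, |F ω x y| ≤ b ω) :
    Integrable (fun ω => quadEnergy P w u (F ω)) τ := by
  have hm : Measurable (Function.uncurry fun (ω : Ω) (x : X) => quadErr P w u (F ω x)) :=
    measurable_quadErr P w u (g := fun (p : Ω × X) y => F p.1 p.2 y) hF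
  have hm' : Measurable fun ω => quadEnergy P w u (F ω) := measurable_quadErr P w u hm
  refine Integrable.mono' ((hb.const_mul (P.real Set.univ + ∑ i, |w i|)).const_mul
    (P.real Set.univ + ∑ i, |w i|)) hm'.aestronglyMeasurable ?_
  filter_upwards [ae_abs_quadErr_le P w u hFb] with ω hω
  exact abs_quadErr_le P w u (ae_of_all _ hω) fun i _ => hω _

lemma quadEnergy_const_mul (c : ℝ) (F : X → X → ℝ) :
    quadEnergy P w u (fun x y => c * F x y) = c * quadEnergy P w u F := by
  simp only [quadEnergy, quadErr_const_mul]

variable {P} in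
lemma quadEnergy_mul_add_mul {p q : X → ℝ} (hp : Integrable p P) (hq : Integrable q P) :
    quadEnergy P w u (fun x y => p x * p y + q x * q y) =
      quadErr P w u p ^ 2 + quadErr P w u q ^ 2 := by
  have h1 : ∀ x, quadErr P w u (fun y => p x * p y + q x * q y) =
      p x * quadErr P w u p + q x * quadErr P w u q := fun x => by
    rw [quadErr_add w u (hp.const_mul _) (hq.const_mul _), quadErr_const_mul, quadErr_const_mul]
  rw [quadEnergy]
  simp only [h1]
  rw [quadErr_add w u (hp.mul_const _) (hq.mul_const _), quadErr_mul_const, quadErr_mul_const]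
  ring

end QuadErr

section Gauss

lemma abs_gaussKernel_le_one {E : Type*} [NormedAddCommGroup E] {σ : ℝ} (hσ : 0 < σ) (x y : E) :
    |gaussKernel σ x y| ≤ 1 := by
  rw [gaussKernel, abs_of_pos (Real.exp_pos _), Real.exp_le_one_iff]
  have : 0 ≤ ‖x - y‖ ^ 2 / σ := by positivity
  linarith

lemma gaussKernel_comm {E : Type*} [NormedAddCommGroup E] (σ : ℝ) (x y : E) :
    gaussKernel σ x y = gaussKernel σ y x := by
  rw [gaussKernel, gaussKernel, norm_sub_rev]

lemma measurable_gaussKernel {E : Type*} [NormedAddCommGroup E] [MeasurableSpace E] [BorelSpace E]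
    [SecondCountableTopology E] :
    Measurable fun p : (ℝ × E) × E => gaussKernel p.1.1 p.1.2 p.2 := by
  unfold gaussKernel
  fun_prop

end Gauss

section Fourier

variable {E : Type*} [NormedAddCommGroup E] [InnerProductSpace ℝ E] [FiniteDimensional ℝ E]
  [MeasurableSpace E] [BorelSpace E]

open scoped RealInnerProductSpace

lemma integrable_exp_neg_mul_norm_sq {b : ℝ} (hb : 0 < b) :
    Integrable fun v : E => Real.exp (-(b * ‖v‖ ^ 2)) := by
  have := (GaussianFourier.integrable_cexp_neg_mul_sq_norm_add (V := E) (b := (b : ℂ))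
    (by simpa using hb) 0 0).re
  refine this.congr (ae_of_all _ fun v => ?_)
  simp only [zero_mul, add_zero]
  rw [show (-(b : ℂ) * (‖v‖ : ℂ) ^ 2) = ((-(b * ‖v‖ ^ 2) : ℝ) : ℂ) by push_cast; ring,
    ← Complex.ofReal_exp]
  rfl

/-- The real part of the character of frequency `v`, with a Gaussian weight. -/
noncomputable def charKernel (c b : ℝ) (v x y : E) : ℝ :=
  c * (Real.exp (-(b * ‖v‖ ^ 2)) *
    (Real.cos (2 * Real.pi * ⟪v, x⟫) * Real.cos (2 * Real.pi * ⟪v, y⟫) +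
      Real.sin (2 * Real.pi * ⟪v, x⟫) * Real.sin (2 * Real.pi * ⟪v, y⟫)))

/-- The Gaussian kernel as a positive superposition of characters. -/
lemma gaussKernel_eq_integral_cos {σ : ℝ} (hσ : 0 < σ) (x y : E) :
    gaussKernel σ x y = ∫ v : E, charKernel ((Real.pi * σ) ^ ((Module.finrank ℝ E : ℝ) / 2))
      (Real.pi ^ 2 * σ) v x y := by
  unfold charKernel
  have hpi := Real.pi_pos
  set b : ℝ := Real.pi ^ 2 * σ with hb
  have hb0 : 0 < b := by positivity
  have hF := fourier_gaussian_innerProductSpace (V := E) (b := (b : ℂ)) (by simpa using hb0) (x - y)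
  rw [Real.fourier_eq'] at hF
  have hL : ∫ v : E, Real.exp (-(b * ‖v‖ ^ 2)) * Real.cos (2 * Real.pi * ⟪v, x - y⟫) =
      (∫ v : E, Complex.exp ((↑(-2 * Real.pi * ⟪v, x - y⟫) * Complex.I)) •
        Complex.exp (-(b : ℂ) * (‖v‖ : ℂ) ^ 2)).re := by
    have hi : Integrable fun v : E => Complex.exp ((↑(-2 * Real.pi * ⟪v, x - y⟫) * Complex.I)) •
        Complex.exp (-(b : ℂ) * (‖v‖ : ℂ) ^ 2) := by
      refine Integrable.mono' (integrable_exp_neg_mul_norm_sq hb0) (by fun_prop) ?_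
      refine ae_of_all _ fun v => ?_
      rw [norm_smul, Complex.norm_exp_ofReal_mul_I, one_mul, Complex.norm_exp]
      refine le_of_eq ?_
      congr 1
      rw [show (-(b : ℂ) * (‖v‖ : ℂ) ^ 2) = ((-(b * ‖v‖ ^ 2) : ℝ) : ℂ) by push_cast; ring,
        Complex.ofReal_re]
    rw [← Complex.reCLM_apply, ← ContinuousLinearMap.integral_comp_comm _ hi]
    refine integral_congr_ae (ae_of_all _ fun v => ?_)
    simp only [Complex.reCLM_apply]
    rw [show (-(b : ℂ) * (‖v‖ : ℂ) ^ 2) = ((-(b * ‖v‖ ^ 2) : ℝ) : ℂ) by push_cast; ring,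
      ← Complex.ofReal_exp, smul_eq_mul, Complex.re_mul_ofReal, Complex.exp_ofReal_mul_I_re,
      show -2 * Real.pi * ⟪v, x - y⟫ = -(2 * Real.pi * ⟪v, x - y⟫) by ring, Real.cos_neg, mul_comm]
  have hR : ((Real.pi / b : ℂ) ^ ((Module.finrank ℝ E : ℂ) / 2) *
      Complex.exp (-(Real.pi : ℂ) ^ 2 * (‖x - y‖ : ℂ) ^ 2 / (b : ℂ))).re =
      (Real.pi / b) ^ ((Module.finrank ℝ E : ℝ) / 2) * gaussKernel σ x y := by
    have h1 : (Real.pi / b : ℂ) ^ ((Module.finrank ℝ E : ℂ) / 2) =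
        (((Real.pi / b) ^ ((Module.finrank ℝ E : ℝ) / 2) : ℝ) : ℂ) := by
      rw [Complex.ofReal_cpow (by positivity)]
      push_cast
      rfl
    have h2 : (-(Real.pi : ℂ) ^ 2 * (‖x - y‖ : ℂ) ^ 2 / (b : ℂ)) =
        ((-(‖x - y‖ ^ 2 / σ) : ℝ) : ℂ) := by
      rw [hb]
      have : (Real.pi : ℂ) ≠ 0 := by exact_mod_cast hpi.ne'
      have : (σ : ℂ) ≠ 0 := by exact_mod_cast hσ.ne'
      push_cast
      field_simp
    rw [h1, h2, ← Complex.ofReal_exp, ← Complex.ofReal_mul, Complex.ofReal_re, gaussKernel]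
  rw [hF, hR] at hL
  have hc : Real.pi * σ = (Real.pi / b)⁻¹ := by rw [hb]; field_simp
  have hpos : 0 < (Real.pi / b) ^ ((Module.finrank ℝ E : ℝ) / 2) :=
    Real.rpow_pos_of_pos (by positivity) _
  rw [integral_const_mul, hc, Real.inv_rpow (by positivity)]
  have hL' : ∀ v : E, Real.exp (-(b * ‖v‖ ^ 2)) *
      (Real.cos (2 * Real.pi * ⟪v, x⟫) * Real.cos (2 * Real.pi * ⟪v, y⟫) +
        Real.sin (2 * Real.pi * ⟪v, x⟫) * Real.sin (2 * Real.pi * ⟪v, y⟫)) =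
      Real.exp (-(b * ‖v‖ ^ 2)) * Real.cos (2 * Real.pi * ⟪v, x - y⟫) := fun v => by
    rw [inner_sub_right, mul_sub, Real.cos_sub]
  simp only [hL']
  rw [hL]
  field_simp

variable {ι : Type*} [Fintype ι] (P : Measure E) [IsFiniteMeasure P] (w : ι → ℝ) (u : ι → E)

/-- The squared modulus of the characteristic function of the quadrature error. -/
noncomputable def charPower (v : E) : ℝ :=
  quadErr P w u (fun x => Real.cos (2 * Real.pi * ⟪v, x⟫)) ^ 2 +
    quadErr P w u (fun x => Real.sin (2 * Real.pi * ⟪v, x⟫)) ^ 2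

lemma quadEnergy_charKernel (c b : ℝ) (v : E) :
    quadEnergy P w u (charKernel c b v) =
      c * (Real.exp (-(b * ‖v‖ ^ 2)) * charPower P w u v) := by
  have h : charKernel c b v = fun x y => c * (Real.exp (-(b * ‖v‖ ^ 2)) *
    (Real.cos (2 * Real.pi * ⟪v, x⟫) * Real.cos (2 * Real.pi * ⟪v, y⟫) +
      Real.sin (2 * Real.pi * ⟪v, x⟫) * Real.sin (2 * Real.pi * ⟪v, y⟫))) := rfl
  rw [h, quadEnergy_const_mul, quadEnergy_const_mul, quadEnergy_mul_add_mul, charPower]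
  · exact integrable_of_measurable_of_bound P (by fun_prop) fun x => Real.abs_cos_le_one _
  · exact integrable_of_measurable_of_bound P (by fun_prop) fun x => Real.abs_sin_le_one _

lemma abs_charKernel_le {E : Type*} [NormedAddCommGroup E] [InnerProductSpace ℝ E] {c : ℝ}
    (b : ℝ) (v x y : E) (hc : 0 ≤ c) :
    |charKernel c b v x y| ≤ c * Real.exp (-(b * ‖v‖ ^ 2)) := by
  rw [charKernel, ← Real.cos_sub, abs_mul, abs_mul, abs_of_nonneg hc, abs_of_pos (Real.exp_pos _)]
  exact mul_le_mul_of_nonneg_left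
    (mul_le_of_le_one_right (Real.exp_pos _).le (Real.abs_cos_le_one _)) hc

lemma measurable_charKernel (c b : ℝ) :
    Measurable fun p : (E × E) × E => charKernel c b p.1.1 p.1.2 p.2 := by
  unfold charKernel
  fun_prop

lemma quadEnergy_gaussKernel {σ : ℝ} (hσ : 0 < σ) :
    quadEnergy P w u (gaussKernel σ) = ∫ v : E, (Real.pi * σ) ^ ((Module.finrank ℝ E : ℝ) / 2) *
      (Real.exp (-(Real.pi ^ 2 * σ * ‖v‖ ^ 2)) * charPower P w u v) := by
  have hpi := Real.pi_pos
  have h : (gaussKernel σ : E → E → ℝ) = _ :=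
    funext fun x => funext fun y => gaussKernel_eq_integral_cos hσ x y
  rw [h, quadEnergy_integral_comm P w u (measurable_charKernel _ _)
    ((integrable_exp_neg_mul_norm_sq (b := Real.pi ^ 2 * σ) (by positivity)).const_mul _)
    (ae_of_all _ fun v x y => abs_charKernel_le _ _ _ _ (by positivity))]
  simp only [quadEnergy_charKernel]

lemma integrable_charPower {σ : ℝ} (hσ : 0 < σ) :
    Integrable fun v : E => (Real.pi * σ) ^ ((Module.finrank ℝ E : ℝ) / 2) *
      (Real.exp (-(Real.pi ^ 2 * σ * ‖v‖ ^ 2)) * charPower P w u v) := by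
  have hpi := Real.pi_pos
  have := integrable_quadEnergy (τ := (volume : Measure E)) P w u
    (measurable_charKernel ((Real.pi * σ) ^ ((Module.finrank ℝ E : ℝ) / 2)) (Real.pi ^ 2 * σ))
    ((integrable_exp_neg_mul_norm_sq (b := Real.pi ^ 2 * σ) (by positivity)).const_mul _)
    (ae_of_all _ fun v x y => abs_charKernel_le _ _ _ _ (by positivity))
  simpa only [quadEnergy_charKernel] using this

lemma charPower_nonneg {E : Type*} [NormedAddCommGroup E] [InnerProductSpace ℝ E]
    [MeasurableSpace E] {ι : Type*} [Fintype ι] (P : Measure E) (w : ι → ℝ) (u : ι → E) (v : E) :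
    0 ≤ charPower P w u v := by
  unfold charPower; positivity

lemma quadEnergy_gaussKernel_nonneg {σ : ℝ} (hσ : 0 < σ) :
    0 ≤ quadEnergy P w u (gaussKernel σ) := by
  rw [quadEnergy_gaussKernel P w u hσ]
  have hpi := Real.pi_pos
  exact integral_nonneg fun v => mul_nonneg (by positivity)
    (mul_nonneg (by positivity) (charPower_nonneg P w u v))

/-- Widening a Gaussian kernel by the factor `q ≥ 1` raises its energies by at most
`q ^ (dim / 2)`. -/
lemma quadEnergy_gaussKernel_mul_le {σ q : ℝ} (hσ : 0 < σ) (hq : 1 ≤ q) :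
    quadEnergy P w u (gaussKernel (q * σ)) ≤
      q ^ ((Module.finrank ℝ E : ℝ) / 2) * quadEnergy P w u (gaussKernel σ) := by
  have hpi := Real.pi_pos
  have hq0 : 0 < q := by linarith
  rw [quadEnergy_gaussKernel P w u hσ, quadEnergy_gaussKernel P w u (mul_pos hq0 hσ),
    ← integral_const_mul]
  refine integral_mono (integrable_charPower P w u (mul_pos hq0 hσ))
    ((integrable_charPower P w u hσ).const_mul _) fun v => ?_
  simp only
  rw [← mul_assoc (q ^ _), show Real.pi * (q * σ) = q * (Real.pi * σ) by ring,
    Real.mul_rpow hq0.le (by positivity)]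
  refine mul_le_mul_of_nonneg_left (mul_le_mul_of_nonneg_right ?_ (charPower_nonneg P w u v))
    (by positivity)
  rw [Real.exp_le_exp, neg_le_neg_iff]
  have : 0 ≤ Real.pi ^ 2 * σ * ‖v‖ ^ 2 := by positivity
  nlinarith

end Fourier

section GammaMix

open ProbabilityTheory

lemma abs_gammaMixKernel_le_one {E : Type*} [NormedAddCommGroup E] {ν a : ℝ} (hν : 0 < ν)
    (ha : 0 < a) (x y : E) : |gammaMixKernel ν a x y| ≤ 1 := by
  have := isProbabilityMeasure_gammaMeasure hν ha
  have h := norm_integral_le_of_norm_le_const (μ := gammaMeasure ν a)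
    (f := fun σ => gaussKernel σ x y) (C := 1)
    (by filter_upwards [ae_pos_gammaMeasure] with σ hσ using abs_gaussKernel_le_one hσ x y)
  simpa [gammaMixKernel] using h

lemma gammaMixKernel_comm {E : Type*} [NormedAddCommGroup E] (ν a : ℝ) (x y : E) :
    gammaMixKernel ν a x y = gammaMixKernel ν a y x := by
  simp only [gammaMixKernel, gaussKernel_comm _ x y]

lemma continuous_gammaMixKernel {E : Type*} [NormedAddCommGroup E] {ν a : ℝ} (hν : 0 < ν)
    (ha : 0 < a) : Continuous fun p : E × E => gammaMixKernel ν a p.1 p.2 := by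
  have := isProbabilityMeasure_gammaMeasure hν ha
  refine continuous_of_dominated (bound := fun _ => 1) (fun p => ?_) (fun p => ?_)
    (integrable_const 1) (ae_of_all _ fun σ => ?_)
  · unfold gaussKernel
    exact Measurable.aestronglyMeasurable (by fun_prop)
  · filter_upwards [ae_pos_gammaMeasure] with σ hσ using abs_gaussKernel_le_one hσ _ _
  · unfold gaussKernel
    fun_prop

lemma integrableOn_gamma_density_mul {ν a : ℝ} (hν : 0 < ν) (ha : 0 < a) {f : ℝ → ℝ}
    (hf : Measurable f) {A : ℝ} (hfA : ∀ σ, 0 < σ → |f σ| ≤ A) :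
    IntegrableOn (fun σ : ℝ => a ^ ν / Real.Gamma ν * σ ^ (ν - 1) * Real.exp (-(a * σ)) * f σ)
      (Set.Ioi 0) := by
  have hA : 0 < |A| + 1 := by positivity
  have h := (integrableOn_rpow_mul_exp_mul hν ha (f := fun σ => f σ / (|A| + 1)) (by fun_prop)
    fun σ hσ => by
      rw [abs_div, abs_of_pos hA, div_le_one hA]
      have := hfA σ hσ
      have := le_abs_self A
      linarith).const_mul (a ^ ν / Real.Gamma ν * (|A| + 1))
  refine h.congr (ae_of_all _ fun σ => ?_)
  simp only
  field_simp

variable {E : Type*} [NormedAddCommGroup E] [InnerProductSpace ℝ E] [FiniteDimensional ℝ E]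
  [MeasurableSpace E] [BorelSpace E]
  {ι : Type*} [Fintype ι] (P : Measure E) [IsFiniteMeasure P] (w : ι → ℝ) (u : ι → E)

lemma measurable_quadEnergy_gaussKernel :
    Measurable fun σ => quadEnergy P w u (gaussKernel σ) :=
  measurable_quadErr P w u
    (measurable_quadErr P w u (g := fun (p : ℝ × E) y => gaussKernel p.1 p.2 y)
      measurable_gaussKernel)

lemma abs_quadEnergy_gaussKernel_le {E ι : Type*} [NormedAddCommGroup E] [MeasurableSpace E]
    [Fintype ι] (P : Measure E) [IsFiniteMeasure P] (w : ι → ℝ) (u : ι → E) {σ : ℝ} (hσ : 0 < σ) :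
    |quadEnergy P w u (gaussKernel σ)| ≤ (P.real Set.univ + ∑ i, |w i|) ^ 2 := by
  have h : ∀ x, |quadErr P w u (gaussKernel σ x)| ≤ (P.real Set.univ + ∑ i, |w i|) * 1 := fun x =>
    abs_quadErr_le P w u (ae_of_all _ fun y => abs_gaussKernel_le_one hσ x y)
      fun i _ => abs_gaussKernel_le_one hσ x _
  have := abs_quadErr_le P w u (ae_of_all _ h) fun i _ => h (u i)
  simpa [sq, quadEnergy] using this

lemma quadEnergy_gammaMixKernel {ν a : ℝ} (hν : 0 < ν) (ha : 0 < a) :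
    quadEnergy P w u (gammaMixKernel ν a) = ∫ σ in Set.Ioi (0 : ℝ),
      a ^ ν / Real.Gamma ν * σ ^ (ν - 1) * Real.exp (-(a * σ)) *
        quadEnergy P w u (gaussKernel σ) := by
  have := isProbabilityMeasure_gammaMeasure hν ha
  rw [← integral_gammaMeasure hν ha]
  exact quadEnergy_integral_comm P w u measurable_gaussKernel (integrable_const 1)
    (by filter_upwards [ae_pos_gammaMeasure] with σ hσ using abs_gaussKernel_le_one hσ)

lemma quadEnergy_gammaMixKernel_nonneg {ν a : ℝ} (hν : 0 < ν) (ha : 0 < a) :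
    0 ≤ quadEnergy P w u (gammaMixKernel ν a) := by
  rw [quadEnergy_gammaMixKernel P w u hν ha]
  refine setIntegral_nonneg measurableSet_Ioi fun σ hσ => ?_
  have hσ' : 0 < σ := hσ
  have := quadEnergy_gaussKernel_nonneg P w u hσ'
  have := Real.Gamma_pos_of_pos hν
  positivity

lemma quadEnergy_gammaMixKernel_le_of_ge {ν a b : ℝ} (hν : 0 < ν) (hb : 0 < b) (hab : b ≤ a) :
    quadEnergy P w u (gammaMixKernel ν a) ≤ (a / b) ^ ν * quadEnergy P w u (gammaMixKernel ν b) := by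
  have ha : 0 < a := hb.trans_le hab
  have hΓ := Real.Gamma_pos_of_pos hν
  rw [quadEnergy_gammaMixKernel P w u hν ha, quadEnergy_gammaMixKernel P w u hν hb,
    ← integral_const_mul]
  have hi := fun c (hc : 0 < c) => integrableOn_gamma_density_mul hν hc
    (measurable_quadEnergy_gaussKernel P w u) fun σ hσ => abs_quadEnergy_gaussKernel_le P w u hσ
  refine setIntegral_mono_on (hi a ha) ((hi b hb).const_mul _) measurableSet_Ioi fun σ hσ => ?_
  have hσ' : 0 < σ := hσ
  have h0 := quadEnergy_gaussKernel_nonneg P w u hσ'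
  have hb' : 0 < b ^ ν := Real.rpow_pos_of_pos hb ν
  have h1 : (a / b) ^ ν * (b ^ ν / Real.Gamma ν * σ ^ (ν - 1) * Real.exp (-(b * σ)) *
      quadEnergy P w u (gaussKernel σ)) = a ^ ν / Real.Gamma ν * σ ^ (ν - 1) *
      Real.exp (-(b * σ)) * quadEnergy P w u (gaussKernel σ) := by
    rw [Real.div_rpow ha.le hb.le]
    field_simp
  rw [h1]
  have h2 : Real.exp (-(a * σ)) ≤ Real.exp (-(b * σ)) := by
    rw [Real.exp_le_exp, neg_le_neg_iff]
    exact mul_le_mul_of_nonneg_right hab hσ'.le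
  gcongr

lemma quadEnergy_gammaMixKernel_le_of_le {ν a b : ℝ} (hν : 0 < ν) (ha : 0 < a) (hab : a ≤ b) :
    quadEnergy P w u (gammaMixKernel ν a) ≤
      (b / a) ^ ((Module.finrank ℝ E : ℝ) / 2) * quadEnergy P w u (gammaMixKernel ν b) := by
  have hb : 0 < b := ha.trans_le hab
  have hΓ := Real.Gamma_pos_of_pos hν
  set q := b / a with hq
  have hq0 : 0 < q := by positivity
  have hq1 : 1 ≤ q := (one_le_div ha).2 hab
  set e := fun σ => quadEnergy P w u (gaussKernel σ) with he
  have hem : Measurable e := measurable_quadEnergy_gaussKernel P w u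
  have hpt : ∀ σ ∈ Set.Ioi (0 : ℝ),
      q * (a ^ ν / Real.Gamma ν * (q * σ) ^ (ν - 1) * Real.exp (-(a * (q * σ))) * e (q * σ)) =
      b ^ ν / Real.Gamma ν * σ ^ (ν - 1) * Real.exp (-(b * σ)) * e (q * σ) := by
    intro σ hσ
    have hσ' : 0 < σ := hσ
    have h1 : a * (q * σ) = b * σ := by rw [hq]; field_simp
    have h2 : q * a ^ ν * (q * σ) ^ (ν - 1) = b ^ ν * σ ^ (ν - 1) := by
      have : b = q * a := by rw [hq]; field_simp
      rw [Real.mul_rpow hq0.le hσ'.le, Real.rpow_sub_one hq0.ne', this,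
        Real.mul_rpow hq0.le ha.le]
      field_simp
    rw [h1]
    calc _ = (q * a ^ ν * (q * σ) ^ (ν - 1)) / Real.Gamma ν * Real.exp (-(b * σ)) * e (q * σ) := by
          ring
      _ = _ := by rw [h2]; ring
  have hcv := integral_comp_mul_left_Ioi
    (fun σ => a ^ ν / Real.Gamma ν * σ ^ (ν - 1) * Real.exp (-(a * σ)) * e σ) 0 hq0
  rw [mul_zero, smul_eq_mul, eq_inv_mul_iff_mul_eq₀ hq0.ne', ← integral_const_mul,
    setIntegral_congr_fun measurableSet_Ioi hpt] at hcv
  rw [quadEnergy_gammaMixKernel P w u hν ha, quadEnergy_gammaMixKernel P w u hν hb, ← hcv,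
    ← integral_const_mul]
  refine setIntegral_mono_on (integrableOn_gamma_density_mul hν hb (hem.comp (measurable_const_mul q))
    fun σ hσ => abs_quadEnergy_gaussKernel_le P w u (mul_pos hq0 hσ))
    ((integrableOn_gamma_density_mul hν hb hem fun σ hσ =>
      abs_quadEnergy_gaussKernel_le P w u hσ).const_mul _) measurableSet_Ioi fun σ hσ => ?_
  have hσ' : 0 < σ := hσ
  have := quadEnergy_gaussKernel_mul_le P w u hσ' hq1
  calc _ ≤ b ^ ν / Real.Gamma ν * σ ^ (ν - 1) * Real.exp (-(b * σ)) *
        (q ^ ((Module.finrank ℝ E : ℝ) / 2) * e σ) := by gcongr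
    _ = _ := by ring

/-- The energies of the gamma mixtures of the same order are comparable. -/
lemma quadEnergy_gammaMixKernel_le {ν a b : ℝ} (hν : 0 < ν) (ha : 0 < a) (hb : 0 < b) :
    quadEnergy P w u (gammaMixKernel ν a) ≤ ((a / b) ^ ν +
      (b / a) ^ ((Module.finrank ℝ E : ℝ) / 2)) * quadEnergy P w u (gammaMixKernel ν b) := by
  have h0 := quadEnergy_gammaMixKernel_nonneg P w u hν hb
  have h1 : 0 ≤ (a / b) ^ ν := by positivity
  have h2 : 0 ≤ (b / a) ^ ((Module.finrank ℝ E : ℝ) / 2) := by positivity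
  rw [add_mul]
  rcases le_total a b with h | h
  · have := quadEnergy_gammaMixKernel_le_of_le P w u hν ha h
    have := mul_nonneg h1 h0
    linarith
  · have := quadEnergy_gammaMixKernel_le_of_ge P w u hν hb h
    have := mul_nonneg h2 h0
    linarith

lemma quadEnergy_zero_measure {X : Type*} [MeasurableSpace X] (w : ι → ℝ) (u : ι → X)
    (F : X → X → ℝ) :
    quadEnergy 0 w u F = ∑ i, w i * ∑ j, w j * F (u i) (u j) := by
  simp [quadEnergy, quadErr]

/-- The gamma mixture kernel is strictly positive definite. -/
lemma quadEnergy_zero_gammaMixKernel_pos {ν a : ℝ} (hν : 0 < ν) (ha : 0 < a)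
    (hu : Function.Injective u) (hw : w ≠ 0) :
    0 < quadEnergy 0 w u (gammaMixKernel ν a) := by
  classical
  have hΓ := Real.Gamma_pos_of_pos hν
  set e := fun σ => quadEnergy (0 : Measure E) w u (gaussKernel σ) with he
  have hlim : Tendsto e (nhdsWithin 0 (Set.Ioi 0))
      (nhds (∑ i, w i * ∑ j, w j * if i = j then 1 else 0)) := by
    simp only [he, quadEnergy_zero_measure]
    refine tendsto_finsetSum _ fun i _ => Tendsto.const_mul _ <|
      tendsto_finsetSum _ fun j _ => Tendsto.const_mul _ ?_
    by_cases hij : i = j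
    · simp [hij, gaussKernel]
    · rw [if_neg hij]
      have hr : 0 < ‖u i - u j‖ ^ 2 := by
        have := norm_pos_iff.2 (sub_ne_zero.2 (hu.ne hij))
        positivity
      refine Real.tendsto_exp_neg_atTop_nhds_zero.comp ?_
      change Tendsto (fun σ : ℝ => ‖u i - u j‖ ^ 2 * σ⁻¹) _ _
      exact tendsto_inv_nhdsGT_zero.const_mul_atTop hr
  have hpos : 0 < ∑ i, w i * ∑ j, w j * if i = j then (1 : ℝ) else 0 := by
    simp only [mul_ite, mul_one, mul_zero, Finset.sum_ite_eq, Finset.mem_univ, if_true]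
    obtain ⟨i, hi⟩ := Function.ne_iff.1 hw
    exact Finset.sum_pos' (fun j _ => mul_self_nonneg _) ⟨i, Finset.mem_univ _, mul_self_pos.2 hi⟩
  have hev := hlim.eventually (lt_mem_nhds hpos)
  obtain ⟨δ, hδ, hδ'⟩ := mem_nhdsGT_iff_exists_Ioo_subset.1 hev
  rw [quadEnergy_gammaMixKernel 0 w u hν ha, setIntegral_pos_iff_support_of_nonneg_ae]
  · refine lt_of_lt_of_le ?_ (measure_mono (s := Set.Ioo 0 δ) fun σ hσ => ⟨?_, hσ.1⟩)
    · simpa using hδ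
    · have h1 : 0 < e σ := hδ' hσ
      have h2 : 0 < σ := hσ.1
      have : 0 < a ^ ν / Real.Gamma ν * σ ^ (ν - 1) * Real.exp (-(a * σ)) * e σ := by positivity
      exact this.ne'
  · filter_upwards [ae_restrict_mem measurableSet_Ioi] with σ hσ
    have hσ' : 0 < σ := hσ
    have := quadEnergy_gaussKernel_nonneg (0 : Measure E) w u hσ'
    simp only [Pi.zero_apply]
    positivity
  · exact integrableOn_gamma_density_mul hν ha (measurable_quadEnergy_gaussKernel 0 w u)
      fun σ hσ => abs_quadEnergy_gaussKernel_le 0 w u hσ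

end GammaMix

section Minimal

variable {X ι : Type*} [MeasurableSpace X] [Fintype ι]

/-- Weights for which the kernel sections at the nodes are integrated exactly minimize the
energy. -/
lemma quadEnergy_eq_add_of_quadErr_eq_zero (P : Measure X) [IsFiniteMeasure P] {w : ι → ℝ}
    (w' : ι → ℝ) (u : ι → X) {F : X → X → ℝ} (hF : Measurable (Function.uncurry F))
    {A : ℝ} (hA : ∀ x y, |F x y| ≤ A) (hsymm : ∀ x y, F x y = F y x)
    (h0 : ∀ i, quadErr P w u (F (u i)) = 0) :
    quadEnergy P w' u F = quadEnergy P w u F + quadEnergy 0 (w' - w) u F := by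
  have hsplit : ∀ g : X → ℝ, quadErr P w' u g = quadErr P w u g + quadErr 0 (w' - w) u g := by
    intro g
    simp [quadErr, sub_mul, Finset.sum_sub_distrib]
  have hFi : ∀ x, Integrable (F x) P := fun x =>
    integrable_of_measurable_of_bound P (hF.comp (measurable_const.prodMk measurable_id)) (hA x)
  have h1 : Integrable (fun x => quadErr P w u (F x)) P :=
    integrable_of_measurable_of_bound P (measurable_quadErr P w u hF) fun x =>
      abs_quadErr_le P w u (ae_of_all _ (hA x)) fun i _ => hA x _
  have h2 : ∀ x, quadErr 0 (w' - w) u (F x) = ∑ i, (w i - w' i) * F (u i) x := fun x => by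
    simp only [quadErr, integral_zero_measure, zero_sub, ← Finset.sum_neg_distrib, hsymm x,
      Pi.sub_apply, ← neg_mul, neg_sub]
  have h3 : ∀ i, Integrable (fun x => (w i - w' i) * F (u i) x) P := fun i =>
    (hFi (u i)).const_mul _
  have h4 : quadErr P w u (fun x => quadErr 0 (w' - w) u (F x)) = 0 := by
    simp only [h2]
    rw [quadErr_finsetSum w u _ fun i _ => h3 i]
    exact Finset.sum_eq_zero fun i _ => by rw [quadErr_const_mul, h0, mul_zero]
  have h5 : quadErr 0 (w' - w) u (fun x => quadErr P w u (F x)) = 0 := by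
    simp [quadErr] at h0 ⊢
    simp [h0]
  have h6 : Integrable (fun x => quadErr 0 (w' - w) u (F x)) P := by
    simp only [h2]
    exact integrable_finsetSum _ fun i _ => h3 i
  have h7 : quadErr 0 (w' - w) u (fun x => quadErr P w u (F x) + quadErr 0 (w' - w) u (F x)) =
      quadErr 0 (w' - w) u (fun x => quadErr P w u (F x)) +
        quadErr 0 (w' - w) u (fun x => quadErr 0 (w' - w) u (F x)) :=
    quadErr_add _ _ (by simp) (by simp)
  rw [quadEnergy, hsplit]
  simp only [hsplit (F _)]
  rw [quadErr_add w u h1 h6, h4, h7, h5, add_zero, zero_add]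
  rfl

end Minimal

section Norming

/-- The matrix of values of the monomials of partial degrees at most `n` at the points `ξ α`. -/
def monomialMatrix {s n : ℕ} (ξ : (Fin s → Fin (n + 1)) → Fin s → ℝ) :
    Matrix (Fin s → Fin (n + 1)) (Fin s → Fin (n + 1)) ℝ :=
  Matrix.of fun β α => ∏ i, ξ α i ^ (β i : ℕ)

/-- Monomials of partial degrees at most `n` are linearly independent on the integer grid. -/
lemma det_monomialMatrix_grid_ne_zero (s n : ℕ) :
    (monomialMatrix fun (α : Fin s → Fin (n + 1)) i => ((α i : ℕ) : ℝ)).det ≠ 0 := by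
  classical
  intro hdet
  obtain ⟨c, hc0, hc⟩ := Matrix.exists_vecMul_eq_zero_iff.2 hdet
  set d : (Fin s → Fin (n + 1)) → (Fin s →₀ ℕ) :=
    fun β => Finsupp.equivFunOnFinite.symm fun i => (β i : ℕ) with hd
  have hdinj : Function.Injective d := by
    intro β β' h
    funext i
    have := DFunLike.congr_fun h i
    simpa [hd, Fin.ext_iff] using this
  set Q : MvPolynomial (Fin s) ℝ := ∑ β, MvPolynomial.monomial (d β) (c β) with hQ
  have hcoeff : ∀ β, Q.coeff (d β) = c β := by
    intro β
    simp only [hQ, MvPolynomial.coeff_sum, MvPolynomial.coeff_monomial, hdinj.eq_iff]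
    simp
  have hQ0 : Q = 0 := by
    refine MvPolynomial.eq_zero_of_eval_zero_at_prod_finset Q
      (fun _ => (Finset.univ : Finset (Fin (n + 1))).image fun k : Fin (n + 1) => ((k : ℕ) : ℝ)) ?_ ?_
    · intro i
      rw [Finset.card_image_of_injective _ fun a b h => Fin.ext (by exact_mod_cast h),
        Finset.card_univ, Fintype.card_fin, Nat.lt_succ_iff, hQ]
      refine (MvPolynomial.degreeOf_sum_le _ _ _).trans (Finset.sup_le fun β _ => ?_)
      refine (MvPolynomial.degreeOf_le_iff).2 fun m hm => ?_
      have := MvPolynomial.support_monomial_subset hm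
      rw [Finset.mem_singleton.1 this]
      simpa [hd] using Nat.lt_succ_iff.1 (β i).2
    · intro x hx
      simp only [Finset.mem_image, Finset.mem_univ, true_and] at hx
      choose α hα using hx
      have := congr_fun hc α
      simp only [Matrix.vecMul, dotProduct, monomialMatrix, Matrix.of_apply, Pi.zero_apply] at this
      rw [hQ, map_sum, ← this]
      refine Finset.sum_congr rfl fun β _ => ?_
      rw [MvPolynomial.eval_monomial, Finsupp.prod_fintype _ _ (by simp)]
      simp [hd, hα]
  apply hc0
  funext β
  rw [← hcoeff β, hQ0]
  simp

/-- Moments up to a fixed degree are matched, with control of the weights, by point masses at small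
perturbations of the integer grid. -/
lemma exists_weights_of_moments (s n : ℕ) : ∃ δ > 0, ∃ A > 0,
    ∀ ξ : (Fin s → Fin (n + 1)) → Fin s → ℝ, (∀ α i, |ξ α i - (α i : ℕ)| ≤ δ) →
    ∀ (μ : (Fin s → Fin (n + 1)) → ℝ) (B : ℝ), (∀ β, |μ β| ≤ B) →
    ∃ w : (Fin s → Fin (n + 1)) → ℝ,
      (∀ β, ∑ α, w α * ∏ i, ξ α i ^ (β i : ℕ) = μ β) ∧ ∑ α, |w α| ≤ A * B := by
  classical
  set g : (Fin s → Fin (n + 1)) → Fin s → ℝ := fun α i => ((α i : ℕ) : ℝ) with hg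
  have hcont : Continuous fun ξ : (Fin s → Fin (n + 1)) → Fin s → ℝ => monomialMatrix ξ := by
    unfold monomialMatrix
    fun_prop
  have hg0 := det_monomialMatrix_grid_ne_zero s n
  have hinv : ∀ β α, ContinuousAt
      (fun ξ => (monomialMatrix ξ).det⁻¹ * (monomialMatrix ξ).adjugate β α) g := by
    intro β α
    refine ContinuousAt.mul (ContinuousAt.inv₀ hcont.matrix_det.continuousAt hg0) ?_
    exact (hcont.matrix_adjugate.matrix_elem β α).continuousAt
  set A₀ : ℝ := ∑ β, ∑ α, (|(monomialMatrix g).det⁻¹ * (monomialMatrix g).adjugate β α| + 1) with hA₀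
  have hev : ∀ᶠ ξ in nhds g, (monomialMatrix ξ).det ≠ 0 ∧
      ∀ β α, |(monomialMatrix ξ).det⁻¹ * (monomialMatrix ξ).adjugate β α| <
        |(monomialMatrix g).det⁻¹ * (monomialMatrix g).adjugate β α| + 1 := by
    refine (hcont.matrix_det.continuousAt.eventually_ne hg0).and ?_
    rw [eventually_all]
    intro β
    rw [eventually_all]
    intro α
    exact (hinv β α).abs.eventually (gt_mem_nhds (lt_add_one _))
  obtain ⟨δ, hδ, hball⟩ := Metric.eventually_nhds_iff.1 hev
  refine ⟨δ / 2, by positivity, A₀, ?_, fun ξ hξ μ B hμ => ?_⟩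
  · exact Finset.sum_pos (fun β _ => Finset.sum_pos (fun α _ => by positivity) Finset.univ_nonempty)
      Finset.univ_nonempty
  have hdist : dist ξ g < δ := by
    refine lt_of_le_of_lt ((dist_pi_le_iff (by positivity)).2 fun α =>
      (dist_pi_le_iff (by positivity)).2 fun i => ?_) (half_lt_self hδ)
    rw [Real.dist_eq]
    exact hξ α i
  obtain ⟨hdet, hbd⟩ := hball hdist
  refine ⟨(monomialMatrix ξ)⁻¹.mulVec μ, fun β => ?_, ?_⟩
  · have h := congr_fun (show (monomialMatrix ξ).mulVec ((monomialMatrix ξ)⁻¹.mulVec μ) = μ by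
      rw [Matrix.mulVec_mulVec, Matrix.mul_nonsing_inv _ (isUnit_iff_ne_zero.2 hdet),
        Matrix.one_mulVec]) β
    rw [← h]
    simp only [Matrix.mulVec, dotProduct, monomialMatrix, Matrix.of_apply]
    exact Finset.sum_congr rfl fun α _ => mul_comm _ _
  · rw [hA₀, Finset.sum_mul]
    refine Finset.sum_le_sum fun β _ => ?_
    rw [Finset.sum_mul]
    simp only [Matrix.mulVec, dotProduct]
    refine (Finset.abs_sum_le_sum_abs _ _).trans (Finset.sum_le_sum fun α _ => ?_)
    rw [abs_mul]
    refine mul_le_mul ?_ (hμ α) (abs_nonneg _) (by positivity)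
    have := (hbd β α).le
    rwa [Matrix.inv_def, Ring.inverse_eq_inv', Matrix.smul_apply, smul_eq_mul]

/-- An error functional that vanishes on the monomials of partial degrees at most `n` vanishes on
the polynomials of total degree at most `n`. -/
lemma quadErr_eval_eq_zero {X ι : Type*} [MeasurableSpace X] [Fintype ι] {P : Measure X}
    {w : ι → ℝ} {u : ι → X} {s n : ℕ} {ξ : X → Fin s → ℝ}
    (hint : ∀ d : Fin s → ℕ, Integrable (fun x => ∏ i, ξ x i ^ d i) P)
    (h0 : ∀ β : Fin s → Fin (n + 1), quadErr P w u (fun x => ∏ i, ξ x i ^ (β i : ℕ)) = 0)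
    {q : MvPolynomial (Fin s) ℝ} (hq : q.totalDegree ≤ n) :
    quadErr P w u (fun x => MvPolynomial.eval (ξ x) q) = 0 := by
  simp only [MvPolynomial.eval_eq']
  rw [quadErr_finsetSum w u _ fun (d : Fin s →₀ ℕ) _ =>
    (hint d).const_mul (MvPolynomial.coeff d q)]
  refine Finset.sum_eq_zero fun d hd => ?_
  rw [quadErr_const_mul]
  have hdn : ∀ i, d i < n + 1 := fun i => by
    have h1 : d i ≤ d.sum fun _ e => e := by
      rw [Finsupp.sum_fintype _ _ fun _ => rfl]
      exact Finset.single_le_sum (f := fun i => d i) (fun _ _ => Nat.zero_le _) (Finset.mem_univ i)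
    exact Nat.lt_succ_iff.2 (h1.trans ((MvPolynomial.le_totalDegree hd).trans hq))
  have := h0 fun i => ⟨d i, hdn i⟩
  simp only at this
  rw [this, mul_zero]

end Norming

section LocalRule

/-- A quadrature rule for a measure `Q`, both near `c`, that is exact for the polynomials of degree
at most `n` in the squared distance to any point. -/
structure IsLocalRule {s : ℕ} {ι : Type*} [Fintype ι] (n : ℕ) (A r : ℝ)
    (Q : Measure (EuclideanSpace ℝ (Fin s))) (w : ι → ℝ) (u : ι → EuclideanSpace ℝ (Fin s))
    (c : EuclideanSpace ℝ (Fin s)) : Prop where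
  measure_near : ∀ᵐ x ∂Q, ‖x - c‖ ≤ r
  nodes_near : ∀ i, w i ≠ 0 → ‖u i - c‖ ≤ r
  sum_abs_le : ∑ i, |w i| ≤ A * Q.real Set.univ
  exact_pow : ∀ (y : EuclideanSpace ℝ (Fin s)) (a b : ℝ) (k : ℕ), 2 * k ≤ n →
    quadErr Q w u (fun x => (a + b * ‖x - y‖ ^ 2) ^ k) = 0

lemma totalDegree_sq_dist_pow_le {s : ℕ} (a b ρ : ℝ) (z : Fin s → ℝ) (k : ℕ) :
    ((MvPolynomial.C a + MvPolynomial.C b * ∑ i, (MvPolynomial.C (z i) +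
      MvPolynomial.C ρ * MvPolynomial.X i) ^ 2 : MvPolynomial (Fin s) ℝ) ^ k).totalDegree ≤ 2 * k := by
  have h1 : ∀ i : Fin s, (MvPolynomial.C (z i) + MvPolynomial.C ρ * MvPolynomial.X i :
      MvPolynomial (Fin s) ℝ).totalDegree ≤ 1 := fun i => by
    refine (MvPolynomial.totalDegree_add _ _).trans (max_le (by simp) ?_)
    refine (MvPolynomial.totalDegree_mul _ _).trans ?_
    simp
  refine (MvPolynomial.totalDegree_pow _ _).trans ?_
  rw [mul_comm]
  refine Nat.mul_le_mul_right _ ?_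
  refine (MvPolynomial.totalDegree_add _ _).trans (max_le (by simp) ?_)
  refine (MvPolynomial.totalDegree_mul _ _).trans ?_
  simp only [MvPolynomial.totalDegree_C, zero_add]
  refine (MvPolynomial.totalDegree_finsetSum _ _).trans (Finset.sup_le fun i _ => ?_)
  refine (MvPolynomial.totalDegree_pow _ _).trans ?_
  have := h1 i
  omega

lemma abs_coord_le_norm {s : ℕ} (x : EuclideanSpace ℝ (Fin s)) (i : Fin s) : |x i| ≤ ‖x‖ := by
  simpa using PiLp.norm_apply_le x i

/-- In a convex set that contains a ball, data sites of small fill distance `h` support local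
quadrature rules of any degree, for any measure on a ball of radius `h`. -/
lemma exists_isLocalRule {s : ℕ} (n : ℕ) {U : Set (EuclideanSpace ℝ (Fin s))} (hU : Convex ℝ U)
    {x₀ : EuclideanSpace ℝ (Fin s)} {r₀ d : ℝ} (hr₀ : 0 < r₀)
    (hball : Metric.closedBall x₀ r₀ ⊆ U) (hd : ∀ x ∈ U, ‖x - x₀‖ ≤ d) :
    ∃ h₀ > 0, ∃ A > 0, ∃ R ≥ 1, ∀ h, 0 < h → h ≤ h₀ →
      ∀ (m : ℕ) (u : Fin m → EuclideanSpace ℝ (Fin s)), (∀ v ∈ U, ∃ i, ‖v - u i‖ ≤ h) →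
      ∀ (Q : Measure (EuclideanSpace ℝ (Fin s))) [IsFiniteMeasure Q],
      ∀ c ∈ U, (∀ᵐ x ∂Q, ‖x - c‖ ≤ h) →
      ∃ w : Fin m → ℝ, IsLocalRule n A (R * h) Q w u c := by
  classical
  obtain ⟨δ, hδ, A₀, hA₀, hnorm⟩ := exists_weights_of_moments s n
  have hd0 : 0 ≤ d := (norm_nonneg _).trans (hd x₀ (hball (Metric.mem_closedBall_self hr₀.le)))
  set γ : (Fin s → Fin (n + 1)) → EuclideanSpace ℝ (Fin s) :=
    fun α => WithLp.toLp 2 fun i => ((α i : ℕ) : ℝ) with hγ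
  set G : ℝ := ∑ α, ‖γ α‖ + 1 with hG
  have hG0 : 0 < G := by positivity
  have hγG : ∀ α, ‖γ α‖ ≤ G := fun α => by
    have := Finset.single_le_sum (f := fun α => ‖γ α‖) (fun _ _ => norm_nonneg _)
      (Finset.mem_univ α)
    linarith
  set b : ℝ := δ + G * d / r₀ + 1 with hb
  have hb1 : 1 ≤ b := by
    have : 0 ≤ G * d / r₀ := by positivity
    linarith
  refine ⟨δ * r₀ / G, by positivity, A₀ * (b ^ n) ^ s, by positivity,
    1 + G / δ + G * d / (δ * r₀), ?_, ?_⟩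
  · have : 0 ≤ G / δ + G * d / (δ * r₀) := by positivity
    linarith
  intro h hh hh₀ m u hu Q _ c hc hQ
  set ρ : ℝ := h / δ with hρ
  have hρ0 : 0 < ρ := by positivity
  set t : ℝ := G * ρ / r₀ with ht
  have ht0 : 0 < t := by positivity
  have ht1 : t ≤ 1 := by
    rw [ht, hρ, div_le_one hr₀]
    rw [le_div_iff₀ hG0] at hh₀
    rw [mul_div_assoc', div_le_iff₀ hδ]
    linarith
  set x' : EuclideanSpace ℝ (Fin s) := c + t • (x₀ - c) with hx'
  have hcx' : ‖c - x'‖ ≤ t * d := by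
    have : c - x' = t • (c - x₀) := by rw [hx', smul_sub, smul_sub]; abel
    rw [this, norm_smul, Real.norm_of_nonneg ht0.le]
    exact mul_le_mul_of_nonneg_left (hd c hc) ht0.le
  have hnode : ∀ α, x' + ρ • γ α ∈ U := by
    intro α
    have h1 : x₀ + (ρ / t) • γ α ∈ U := by
      apply hball
      rw [Metric.mem_closedBall, dist_eq_norm, add_sub_cancel_left, norm_smul,
        Real.norm_of_nonneg (by positivity)]
      have : ρ / t = r₀ / G := by rw [ht]; field_simp
      rw [this, div_mul_eq_mul_div, div_le_iff₀ hG0]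
      exact mul_le_mul_of_nonneg_left (hγG α) hr₀.le
    have h2 := hU hc h1 (sub_nonneg.2 ht1) ht0.le (by ring)
    have h3 : (1 - t) • c + t • (x₀ + (ρ / t) • γ α) = x' + ρ • γ α := by
      rw [hx', smul_add, smul_smul, mul_div_cancel₀ _ ht0.ne', sub_smul, one_smul, smul_sub]
      abel
    rwa [h3] at h2
  choose τ hτ using fun α => hu _ (hnode α)
  set ξ : EuclideanSpace ℝ (Fin s) → Fin s → ℝ := fun x i => (x i - x' i) / ρ with hξ
  have hpert : ∀ α i, |ξ (u (τ α)) i - (α i : ℕ)| ≤ δ := by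
    intro α i
    have h1 : ξ (u (τ α)) i - (α i : ℕ) = -(((x' + ρ • γ α - u (τ α)) i) / ρ) := by
      simp only [hξ, hγ, PiLp.sub_apply, PiLp.add_apply, PiLp.smul_apply, smul_eq_mul]
      field_simp
      ring
    rw [h1, abs_neg, abs_div, abs_of_pos hρ0, div_le_iff₀ hρ0]
    refine (abs_coord_le_norm _ i).trans ((hτ α).trans ?_)
    rw [hρ, mul_div_cancel₀ _ hδ.ne']
  have hξb : ∀ᵐ x ∂Q, ∀ i, |ξ x i| ≤ b := by
    filter_upwards [hQ] with x hx i
    simp only [hξ]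
    rw [abs_div, abs_of_pos hρ0, div_le_iff₀ hρ0]
    have h1 : |x i - x' i| ≤ ‖x - x'‖ := by simpa using abs_coord_le_norm (x - x') i
    have h2 : ‖x - x'‖ ≤ ‖x - c‖ + ‖c - x'‖ := norm_sub_le_norm_sub_add_norm_sub _ _ _
    have h3 : h + t * d = (δ + G * d / r₀) * ρ := by rw [ht, hρ]; field_simp
    have h4 : (δ + G * d / r₀) * ρ ≤ b * ρ := by
      apply mul_le_mul_of_nonneg_right _ hρ0.le
      linarith
    linarith
  have hmon : ∀ (e : Fin s → ℕ), ∀ᵐ x ∂Q, ‖∏ i, ξ x i ^ e i‖ ≤ ∏ i, b ^ e i := by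
    intro e
    filter_upwards [hξb] with x hx
    rw [norm_prod]
    refine Finset.prod_le_prod (fun _ _ => norm_nonneg _) fun i _ => ?_
    rw [norm_pow]
    exact pow_le_pow_left₀ (norm_nonneg _) (hx i) _
  have hξc : Continuous ξ := by
    simp only [hξ]
    fun_prop
  have hint : ∀ e : Fin s → ℕ, Integrable (fun x => ∏ i, ξ x i ^ e i) Q := fun e => by
    refine Integrable.of_bound (Continuous.aestronglyMeasurable ?_) _ (hmon e)
    exact continuous_finsetProd _ fun i _ => ((continuous_apply i).comp hξc).pow _
  obtain ⟨w₀, hw₀, hw₀s⟩ := hnorm (fun α => ξ (u (τ α))) hpert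
    (fun β => ∫ x, ∏ i, ξ x i ^ (β i : ℕ) ∂Q) ((b ^ n) ^ s * Q.real Set.univ) (fun β => by
      refine (norm_integral_le_of_norm_le_const (hmon _)).trans ?_
      refine mul_le_mul_of_nonneg_right ?_ measureReal_nonneg
      calc ∏ i, b ^ (β i : ℕ) ≤ ∏ _i : Fin s, b ^ n := Finset.prod_le_prod
            (fun _ _ => by positivity)
            fun i _ => pow_le_pow_right₀ hb1 (Nat.lt_succ_iff.1 (β i).2)
        _ = (b ^ n) ^ s := by simp)
  have hpush : ∀ g : EuclideanSpace ℝ (Fin s) → ℝ,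
      ∑ i, (∑ α with τ α = i, w₀ α) * g (u i) = ∑ α, w₀ α * g (u (τ α)) := by
    intro g
    rw [← Finset.sum_fiberwise (s := Finset.univ) (g := τ)]
    refine Finset.sum_congr rfl fun i _ => ?_
    rw [Finset.sum_mul]
    refine Finset.sum_congr rfl fun α hα => ?_
    rw [(Finset.mem_filter.1 hα).2]
  refine ⟨fun i => ∑ α with τ α = i, w₀ α, ?_, ?_, ?_, ?_⟩
  · filter_upwards [hQ] with x hx
    refine hx.trans ?_
    have : 0 ≤ (G / δ + G * d / (δ * r₀)) * h := by positivity
    linarith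
  · intro i hi
    obtain ⟨α, hα⟩ : ∃ α, τ α = i := by
      by_contra hne
      push Not at hne
      exact hi (by simp [hne])
    rw [← hα]
    have h1 : u (τ α) - c = -(x' + ρ • γ α - u (τ α)) + ρ • γ α - (c - x') := by abel
    have h2 : ‖u (τ α) - c‖ ≤ h + ρ * G + t * d := by
      rw [h1]
      refine (norm_sub_le _ _).trans (add_le_add ((norm_add_le _ _).trans (add_le_add ?_ ?_)) hcx')
      · rw [norm_neg]; exact hτ α
      · rw [norm_smul, Real.norm_of_nonneg hρ0.le]
        exact mul_le_mul_of_nonneg_left (hγG α) hρ0.le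
    refine h2.trans (le_of_eq ?_)
    rw [ht, hρ]
    field_simp
  · calc ∑ i, |∑ α with τ α = i, w₀ α| ≤ ∑ i, ∑ α with τ α = i, |w₀ α| :=
          Finset.sum_le_sum fun i _ => Finset.abs_sum_le_sum_abs _ _
      _ = ∑ α, |w₀ α| := Finset.sum_fiberwise _ _ _
      _ ≤ _ := hw₀s
      _ = _ := by ring
  · intro y a b' k hk
    have h0 := quadErr_eval_eq_zero (P := Q) (w := fun i => ∑ α with τ α = i, w₀ α) (u := u)
      (n := n) hint (fun β => by
        rw [quadErr, hpush fun x => ∏ i, ξ x i ^ (β i : ℕ), hw₀ β, sub_self])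
      ((totalDegree_sq_dist_pow_le a b' ρ (fun i => x' i - y i) k).trans hk)
    rw [← h0]
    congr 1
    funext x
    simp only [map_pow, map_add, map_mul, map_sum, MvPolynomial.eval_C, MvPolynomial.eval_X]
    congr 3
    rw [EuclideanSpace.norm_sq_eq]
    refine Finset.sum_congr rfl fun i _ => ?_
    simp only [hξ, Real.norm_eq_abs, sq_abs, PiLp.sub_apply]
    congr 1
    field_simp
    ring

end LocalRule

section GaussRemainder

variable {E : Type*} [NormedAddCommGroup E]

lemma abs_norm_sub_sub_norm_sub_le {c c' x y : E} {e : ℝ} (hx : ‖x - c‖ ≤ e) (hy : ‖y - c'‖ ≤ e) :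
    |‖c - c'‖ - ‖x - y‖| ≤ 2 * e := by
  refine (abs_norm_sub_norm_le _ _).trans ?_
  have : c - c' - (x - y) = -(x - c) + (y - c') := by abel
  rw [this]
  refine (norm_add_le _ _).trans ?_
  rw [norm_neg]
  linarith

lemma abs_exp_sub_sum_le (T : ℝ) (n : ℕ) :
    |Real.exp T - ∑ k ∈ Finset.range n, T ^ k / k.factorial| ≤ |T| ^ n * Real.exp |T| := by
  have h := Complex.norm_exp_sub_sum_le_norm_mul_exp (T : ℂ) n
  rw [Complex.norm_real, Real.norm_eq_abs] at h
  rw [← Real.norm_eq_abs, ← Complex.norm_real]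
  push_cast
  exact h

/-- Taylor expansion of a Gaussian kernel in the squared distance, on two balls that are small
compared with its width. -/
lemma abs_gaussKernel_sub_taylor_le {R h σ : ℝ} (κ : ℕ) (hR : 0 ≤ R) (hh : 0 < h)
    (hσ : h ^ 2 ≤ σ) {c c' x y : E} (hx : ‖x - c‖ ≤ R * h) (hy : ‖y - c'‖ ≤ R * h) :
    |gaussKernel σ x y - Real.exp (-(‖c - c'‖ ^ 2 / σ)) * ∑ k ∈ Finset.range (2 * κ),
      (‖c - c'‖ ^ 2 / σ + (-(1 / σ)) * ‖y - x‖ ^ 2) ^ k / k.factorial| ≤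
      ((2 * κ).factorial * Real.exp (40 * R ^ 2)) * (h ^ 2 / σ) ^ κ *
        Real.exp (-(‖c - c'‖ ^ 2 / (2 * σ))) := by
  have hσ0 : 0 < σ := (by positivity : 0 < h ^ 2).trans_le hσ
  set D := ‖c - c'‖ with hD
  set q := Real.sqrt σ with hq
  have hq0 : 0 < q := Real.sqrt_pos.2 hσ0
  have hqσ : σ = q ^ 2 := (Real.sq_sqrt hσ0.le).symm
  have hhq : h ≤ q := Real.le_sqrt_of_sq_le hσ
  set T := D ^ 2 / σ + (-(1 / σ)) * ‖y - x‖ ^ 2 with hT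
  have hTe : gaussKernel σ x y = Real.exp (-(D ^ 2 / σ)) * Real.exp T := by
    rw [gaussKernel, ← Real.exp_add, hT, norm_sub_rev x y]
    congr 1
    ring
  set ϱ := D / q with hϱ
  have hϱ0 : 0 ≤ ϱ := by positivity
  set B := 4 * R * ϱ + 4 * R ^ 2 with hB
  have hB0 : 0 ≤ B := by positivity
  have hε1 : h / q ≤ 1 := (div_le_one hq0).2 hhq
  have hε0 : 0 ≤ h / q := by positivity
  have hTB : |T| ≤ h / q * B := by
    have h1 := abs_norm_sub_sub_norm_sub_le hx hy
    rw [← hD] at h1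
    have h2 : T = (D - ‖x - y‖) * (D + ‖x - y‖) / σ := by
      rw [hT, norm_sub_rev y x]
      field_simp
      ring
    have h3 : |D + ‖x - y‖| ≤ 2 * D + 2 * (R * h) := by
      rw [abs_of_nonneg (by positivity)]
      have := (abs_le.1 h1).1
      linarith
    have h4 : |T| ≤ 2 * (R * h) * (2 * D + 2 * (R * h)) / σ := by
      rw [h2, abs_div, abs_mul, abs_of_pos hσ0]
      gcongr
    have h5 : 2 * (R * h) * (2 * D + 2 * (R * h)) / σ =
        h / q * (4 * R * ϱ + 4 * R ^ 2 * (h / q)) := by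
      rw [hqσ, hϱ]
      field_simp
      ring
    rw [h5] at h4
    refine h4.trans (mul_le_mul_of_nonneg_left ?_ hε0)
    rw [hB]
    have : 4 * R ^ 2 * (h / q) ≤ 4 * R ^ 2 := mul_le_of_le_one_right (by positivity) hε1
    linarith
  have hTB' : |T| ≤ B := hTB.trans (mul_le_of_le_one_left hB0 hε1)
  have hpow : B ^ (2 * κ) ≤ (2 * κ).factorial * Real.exp B := by
    have := Real.pow_div_factorial_le_exp B hB0 (2 * κ)
    rw [div_le_iff₀ (by positivity)] at this
    linarith
  have hεκ : (h / q) ^ (2 * κ) = (h ^ 2 / σ) ^ κ := by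
    rw [pow_mul, div_pow, hqσ]
  have hquad : -(D ^ 2 / σ) + 2 * B ≤ 40 * R ^ 2 + -(D ^ 2 / (2 * σ)) := by
    have e1 : D ^ 2 / σ = ϱ ^ 2 := by rw [hϱ, hqσ, div_pow]
    have e2 : D ^ 2 / (2 * σ) = ϱ ^ 2 / 2 := by rw [← e1]; field_simp
    rw [e1, e2, hB]
    nlinarith [sq_nonneg (ϱ - 8 * R)]
  have hexp : Real.exp (-(D ^ 2 / σ) + 2 * B) =
      Real.exp B * (Real.exp (-(D ^ 2 / σ)) * Real.exp B) := by
    rw [← Real.exp_add, ← Real.exp_add]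
    congr 1
    ring
  rw [hTe, ← mul_sub, abs_mul, abs_of_pos (Real.exp_pos _)]
  calc Real.exp (-(D ^ 2 / σ)) * |Real.exp T - ∑ k ∈ Finset.range (2 * κ), T ^ k / k.factorial|
      ≤ Real.exp (-(D ^ 2 / σ)) * (|T| ^ (2 * κ) * Real.exp |T|) := by
        gcongr
        exact abs_exp_sub_sum_le T _
    _ ≤ Real.exp (-(D ^ 2 / σ)) * ((h / q * B) ^ (2 * κ) * Real.exp B) := by gcongr
    _ = (h ^ 2 / σ) ^ κ * (B ^ (2 * κ) * (Real.exp (-(D ^ 2 / σ)) * Real.exp B)) := by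
        rw [mul_pow, hεκ]; ring
    _ ≤ (h ^ 2 / σ) ^ κ * ((2 * κ).factorial * Real.exp B *
          (Real.exp (-(D ^ 2 / σ)) * Real.exp B)) := by gcongr
    _ = (h ^ 2 / σ) ^ κ * ((2 * κ).factorial * Real.exp (-(D ^ 2 / σ) + 2 * B)) := by
        rw [hexp]; ring
    _ ≤ (h ^ 2 / σ) ^ κ * ((2 * κ).factorial * Real.exp (40 * R ^ 2 + -(D ^ 2 / (2 * σ)))) := by
        exact mul_le_mul_of_nonneg_left (mul_le_mul_of_nonneg_left (Real.exp_le_exp.2 hquad)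
          (by positivity)) (by positivity)
    _ = _ := by rw [Real.exp_add]; ring

lemma gaussKernel_le_of_le_sq {R h σ : ℝ} (hh : 0 < h) (hσ0 : 0 < σ)
    (hσ : σ ≤ h ^ 2) {c c' x y : E} (hx : ‖x - c‖ ≤ R * h) (hy : ‖y - c'‖ ≤ R * h) :
    gaussKernel σ x y ≤ Real.exp (40 * R ^ 2) * Real.exp (-(‖c - c'‖ ^ 2 / (2 * h ^ 2))) := by
  rw [gaussKernel, ← Real.exp_add, Real.exp_le_exp]
  have h1 := (abs_le.1 (abs_norm_sub_sub_norm_sub_le hx hy)).2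
  have h2 : ‖c - c'‖ ^ 2 ≤ 2 * ‖x - y‖ ^ 2 + 8 * R ^ 2 * h ^ 2 := by
    have : ‖c - c'‖ ^ 2 ≤ (‖x - y‖ + 2 * (R * h)) ^ 2 := by
      apply pow_le_pow_left₀ (norm_nonneg _)
      linarith
    nlinarith [sq_nonneg (‖x - y‖ - 2 * (R * h))]
  have h3 : ‖x - y‖ ^ 2 / h ^ 2 ≤ ‖x - y‖ ^ 2 / σ := by gcongr
  have h4 : ‖c - c'‖ ^ 2 / (2 * h ^ 2) ≤ ‖x - y‖ ^ 2 / h ^ 2 + 4 * R ^ 2 := by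
    rw [div_le_iff₀ (by positivity)]
    have : (‖x - y‖ ^ 2 / h ^ 2 + 4 * R ^ 2) * (2 * h ^ 2) =
        2 * ‖x - y‖ ^ 2 + 8 * R ^ 2 * h ^ 2 := by field_simp; ring
    rw [this]
    exact h2
  have := sq_nonneg R
  linarith

end GaussRemainder

section Pair

variable {s : ℕ} {ι : Type*} [Fintype ι]

/-- The interaction of two local rules through a Gaussian kernel. -/
lemma abs_quadErr_quadErr_gaussKernel_le {κ : ℕ} {A R h σ : ℝ} (hR : 1 ≤ R)
    (hh : 0 < h) (hσ : 0 < σ) {Q Q' : Measure (EuclideanSpace ℝ (Fin s))} [IsFiniteMeasure Q]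
    [IsFiniteMeasure Q'] {w w' : ι → ℝ} {u : ι → EuclideanSpace ℝ (Fin s)}
    {c c' : EuclideanSpace ℝ (Fin s)} (hw : IsLocalRule (4 * κ) A (R * h) Q w u c)
    (hw' : IsLocalRule (4 * κ) A (R * h) Q' w' u c') :
    |quadErr Q w u fun x => quadErr Q' w' u fun y => gaussKernel σ x y| ≤
      (1 + A) ^ 2 * ((2 * κ).factorial * Real.exp (40 * R ^ 2)) *
      (h ^ 2 / max σ (h ^ 2)) ^ κ * (Q.real Set.univ * (Q'.real Set.univ *
        Real.exp (-(‖c - c'‖ ^ 2 / (2 * max σ (h ^ 2)))))) := by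
  set S := max σ (h ^ 2) with hS
  set K := ((2 * κ).factorial * Real.exp (40 * R ^ 2)) * (h ^ 2 / S) ^ κ *
    Real.exp (-(‖c - c'‖ ^ 2 / (2 * S))) with hK
  have hS0 : 0 < S := lt_max_of_lt_left hσ
  have hK0 : 0 ≤ K := by positivity
  have hmass : ∀ {Q : Measure (EuclideanSpace ℝ (Fin s))} {w : ι → ℝ}
      {c : EuclideanSpace ℝ (Fin s)}, IsLocalRule (4 * κ) A (R * h) Q w u c →
      Q.real Set.univ + ∑ i, |w i| ≤ (1 + A) * Q.real Set.univ := fun hw => by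
    linarith [hw.sum_abs_le]
  have hinner : ∀ x, ‖x - c‖ ≤ R * h →
      |quadErr Q' w' u fun y => gaussKernel σ x y| ≤
        (Q'.real Set.univ + ∑ i, |w' i|) * K := by
    intro x hx
    rcases le_total (h ^ 2) σ with hcase | hcase
    · have hSσ : S = σ := max_eq_left hcase
      set p : EuclideanSpace ℝ (Fin s) → ℝ := fun y => Real.exp (-(‖c - c'‖ ^ 2 / σ)) *
        ∑ k ∈ Finset.range (2 * κ),
          (‖c - c'‖ ^ 2 / σ + (-(1 / σ)) * ‖y - x‖ ^ 2) ^ k / k.factorial with hp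
      have hpi : ∀ k : ℕ, Integrable (fun y : EuclideanSpace ℝ (Fin s) =>
          (‖c - c'‖ ^ 2 / σ + (-(1 / σ)) * ‖y - x‖ ^ 2) ^ k) Q' := by
        intro k
        have hc : Continuous fun y : EuclideanSpace ℝ (Fin s) =>
          (‖c - c'‖ ^ 2 / σ + (-(1 / σ)) * ‖y - x‖ ^ 2) ^ k := by fun_prop
        obtain ⟨M, hM⟩ := (isCompact_closedBall c' (R * h)).exists_bound_of_continuousOn
          hc.continuousOn
        refine Integrable.of_bound hc.aestronglyMeasurable M ?_
        filter_upwards [hw'.measure_near] with y hy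
        exact hM y (by rwa [Metric.mem_closedBall, dist_eq_norm])
      have hp0 : quadErr Q' w' u p = 0 := by
        rw [hp, quadErr_const_mul, quadErr_finsetSum _ _ _ fun k _ => (hpi k).div_const _,
          Finset.sum_eq_zero, mul_zero]
        intro k hk
        simp only [div_eq_mul_inv _ ((k.factorial : ℕ) : ℝ)]
        rw [quadErr_mul_const, hw'.exact_pow _ _ _ _ (by have := Finset.mem_range.1 hk; omega),
          zero_mul]
      have hpI : Integrable p Q' :=
        (integrable_finsetSum _ fun k _ => (hpi k).div_const _).const_mul _
      have hgI : Integrable (fun y => gaussKernel σ x y) Q' :=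
        integrable_of_measurable_of_bound Q' (by unfold gaussKernel; fun_prop)
          fun y => abs_gaussKernel_le_one hσ x y
      have hsub := quadErr_sub w' u hgI hpI
      rw [hp0, sub_zero] at hsub
      rw [← hsub]
      have hbd : ∀ y, ‖y - c'‖ ≤ R * h → |gaussKernel σ x y - p y| ≤ K := fun y hy => by
        rw [hK, hSσ]
        exact abs_gaussKernel_sub_taylor_le κ (by linarith) hh hcase hx hy
      refine abs_quadErr_le Q' w' u ?_ fun i hi => hbd _ (hw'.nodes_near i hi)
      filter_upwards [hw'.measure_near] with y hy using hbd y hy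
    · have hSh : S = h ^ 2 := max_eq_right hcase
      have hbd : ∀ y, ‖y - c'‖ ≤ R * h → |gaussKernel σ x y| ≤ K := fun y hy => by
        rw [abs_of_pos (by exact Real.exp_pos _), hK, hSh, div_self (by positivity), one_pow,
          mul_one]
        refine (gaussKernel_le_of_le_sq hh hσ hcase hx hy).trans ?_
        rw [mul_assoc]
        refine le_mul_of_one_le_left (by positivity) ?_
        exact_mod_cast Nat.one_le_iff_ne_zero.2 (Nat.factorial_ne_zero _)
      refine abs_quadErr_le Q' w' u ?_ fun i hi => hbd _ (hw'.nodes_near i hi)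
      filter_upwards [hw'.measure_near] with y hy using hbd y hy
  have houter := abs_quadErr_le Q w u
    (g := fun x => quadErr Q' w' u fun y => gaussKernel σ x y)
    (A := (Q'.real Set.univ + ∑ i, |w' i|) * K)
    (by filter_upwards [hw.measure_near] with x hx using hinner x hx)
    fun i hi => hinner _ (hw.nodes_near i hi)
  refine houter.trans ?_
  have h1 : (0 : ℝ) ≤ Q'.real Set.univ + ∑ i, |w' i| := by positivity
  have h0 : (0 : ℝ) ≤ Q.real Set.univ + ∑ i, |w i| := by positivity
  calc _ ≤ (1 + A) * Q.real Set.univ * ((1 + A) * Q'.real Set.univ * K) :=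
        mul_le_mul (hmass hw) (mul_le_mul_of_nonneg_right (hmass hw') hK0)
          (mul_nonneg h1 hK0) (h0.trans (hmass hw))
    _ = _ := by rw [hK]; ring

end Pair

section Energy

/-- Integration over the mixing variable of the bounds for the Gaussian energies. -/
lemma integral_gamma_density_mul_le {ν d H K A : ℝ} {κ : ℕ} (hν : 0 < ν) (hκ : ν + d < κ)
    (hH : 0 < H) (hK : 0 ≤ K) {e : ℝ → ℝ} (he : Measurable e) (heA : ∀ σ, 0 < σ → |e σ| ≤ A)
    (hbd : ∀ σ, 0 < σ → e σ ≤ K * ((H / max σ H) ^ κ * max σ H ^ d)) :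
    ∫ σ in Set.Ioi (0 : ℝ), (1 : ℝ) ^ ν / Real.Gamma ν * σ ^ (ν - 1) * Real.exp (-(1 * σ)) * e σ ≤
      K / Real.Gamma ν * (1 / ν + 1 / (κ - (ν + d))) * H ^ (ν + d) := by
  have hΓ := Real.Gamma_pos_of_pos hν
  have hint := integrableOn_gamma_density_mul hν one_pos he heA
  have hpt : ∀ σ, 0 < σ → (1 : ℝ) ^ ν / Real.Gamma ν * σ ^ (ν - 1) * Real.exp (-(1 * σ)) * e σ ≤
      K / Real.Gamma ν * (σ ^ (ν - 1) * ((H / max σ H) ^ κ * max σ H ^ d)) := by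
    intro σ hσ
    have hm : 0 < max σ H := lt_max_of_lt_left hσ
    have h1 : Real.exp (-(1 * σ)) ≤ 1 := by rw [Real.exp_le_one_iff]; linarith
    rw [Real.one_rpow]
    calc _ ≤ 1 / Real.Gamma ν * σ ^ (ν - 1) * Real.exp (-(1 * σ)) *
          (K * ((H / max σ H) ^ κ * max σ H ^ d)) :=
          mul_le_mul_of_nonneg_left (hbd σ hσ) (by positivity)
      _ ≤ 1 / Real.Gamma ν * σ ^ (ν - 1) * 1 * (K * ((H / max σ H) ^ κ * max σ H ^ d)) := by
          gcongr
      _ = _ := by ring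
  have hsplit : Set.Ioi (0 : ℝ) = Set.Ioc 0 H ∪ Set.Ioi H := (Set.Ioc_union_Ioi_eq_Ioi hH.le).symm
  have hi1 : IntegrableOn (fun σ : ℝ => σ ^ (ν - 1)) (Set.Ioc 0 H) :=
    (intervalIntegral.intervalIntegrable_rpow' (by linarith)).1
  have hi2 : IntegrableOn (fun σ : ℝ => σ ^ (ν - 1 - κ + d)) (Set.Ioi H) :=
    integrableOn_Ioi_rpow_of_lt (by linarith) hH
  have hv1 : ∫ σ in Set.Ioc 0 H, σ ^ (ν - 1) = H ^ ν / ν := by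
    rw [← intervalIntegral.integral_of_le hH.le, integral_rpow (Or.inl (by linarith))]
    simp [Real.zero_rpow hν.ne']
  have hv2 : ∫ σ in Set.Ioi H, σ ^ (ν - 1 - κ + d) = H ^ (ν + d - κ) / (κ - (ν + d)) := by
    rw [integral_Ioi_rpow_of_lt (by linarith) hH, show ν - 1 - κ + d + 1 = ν + d - κ by ring,
      show (κ : ℝ) - (ν + d) = -(ν + d - κ) by ring, neg_div, div_neg]
  have hb1 : ∫ σ in Set.Ioc 0 H, (1 : ℝ) ^ ν / Real.Gamma ν * σ ^ (ν - 1) * Real.exp (-(1 * σ)) * e σ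
      ≤ K / Real.Gamma ν * H ^ d * (H ^ ν / ν) := by
    rw [← hv1, ← integral_const_mul]
    refine setIntegral_mono_on (hint.mono_set Set.Ioc_subset_Ioi_self) (hi1.const_mul _)
      measurableSet_Ioc fun σ hσ => (hpt σ hσ.1).trans (le_of_eq ?_)
    rw [max_eq_right hσ.2, div_self hH.ne', one_pow]
    ring
  have hb2 : ∫ σ in Set.Ioi H, (1 : ℝ) ^ ν / Real.Gamma ν * σ ^ (ν - 1) * Real.exp (-(1 * σ)) * e σ
      ≤ K / Real.Gamma ν * H ^ κ * (H ^ (ν + d - κ) / (κ - (ν + d))) := by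
    rw [← hv2, ← integral_const_mul]
    refine setIntegral_mono_on (hint.mono_set (Set.Ioi_subset_Ioi hH.le)) (hi2.const_mul _)
      measurableSet_Ioi fun σ hσ => ?_
    have hσH : H < σ := hσ
    have hσ0 : 0 < σ := hH.trans hσH
    refine (hpt σ hσ0).trans (le_of_eq ?_)
    rw [max_eq_left hσH.le, Real.rpow_add hσ0, Real.rpow_sub hσ0 (ν - 1), Real.rpow_natCast,
      div_pow]
    ring
  have hpow : H ^ κ * H ^ (ν + d - κ) = H ^ (ν + d) := by
    rw [← Real.rpow_natCast, ← Real.rpow_add hH]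
    congr 1
    ring
  rw [hsplit, setIntegral_union (Set.Ioc_disjoint_Ioi le_rfl) measurableSet_Ioi
    (hint.mono_set Set.Ioc_subset_Ioi_self) (hint.mono_set (Set.Ioi_subset_Ioi hH.le))]
  refine (add_le_add hb1 hb2).trans (le_of_eq ?_)
  calc K / Real.Gamma ν * H ^ d * (H ^ ν / ν) +
        K / Real.Gamma ν * H ^ κ * (H ^ (ν + d - κ) / (κ - (ν + d)))
      = K / Real.Gamma ν * (H ^ ν * H ^ d) * (1 / ν) +
        K / Real.Gamma ν * (H ^ κ * H ^ (ν + d - κ)) * (1 / (κ - (ν + d))) := by ring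
    _ = _ := by rw [hpow, ← Real.rpow_add hH]; ring

variable {s : ℕ}

lemma quadErr_eq_sum_restrict {X ι κ : Type*} [MeasurableSpace X] [Fintype ι] [Fintype κ]
    {P : Measure X} {D : κ → Set X} (hDm : ∀ k, MeasurableSet (D k))
    (hDd : Pairwise (Function.onFun Disjoint D)) (hDP : ∀ᵐ x ∂P, x ∈ ⋃ k, D k)
    (w : κ → ι → ℝ) (u : ι → X) {g : X → ℝ} (hg : Integrable g P) :
    quadErr P (fun i => ∑ k, w k i) u g = ∑ k, quadErr (P.restrict (D k)) (w k) u g := by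
  have h1 : ∫ x, g x ∂P = ∑ k, ∫ x in D k, g x ∂P := by
    rw [← integral_iUnion_fintype hDm hDd fun k => hg.integrableOn,
      Measure.restrict_eq_self_of_ae_mem hDP]
  simp only [quadErr, Finset.sum_sub_distrib, h1, Finset.sum_mul]
  rw [Finset.sum_comm]

/-- The energy of a composite rule is the sum of the interactions of its parts. -/
lemma quadEnergy_eq_sum_restrict {X ι κ : Type*} [MeasurableSpace X] [Fintype ι] [Fintype κ]
    {P : Measure X} [IsFiniteMeasure P] {D : κ → Set X} (hDm : ∀ k, MeasurableSet (D k))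
    (hDd : Pairwise (Function.onFun Disjoint D)) (hDP : ∀ᵐ x ∂P, x ∈ ⋃ k, D k)
    (w : κ → ι → ℝ) (u : ι → X) {F : X → X → ℝ} (hF : Measurable (Function.uncurry F)) {A : ℝ}
    (hA : ∀ x y, |F x y| ≤ A) :
    quadEnergy P (fun i => ∑ k, w k i) u F =
      ∑ k, ∑ k', quadErr (P.restrict (D k)) (w k) u fun x =>
        quadErr (P.restrict (D k')) (w k') u fun y => F x y := by
  have hFi : ∀ x, Integrable (F x) P := fun x =>
    integrable_of_measurable_of_bound P (hF.comp (measurable_const.prodMk measurable_id)) (hA x)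
  have hint : ∀ (Q Q' : Measure X) [IsFiniteMeasure Q] [IsFiniteMeasure Q'] (v : ι → ℝ),
      Integrable (fun x => quadErr Q' v u (F x)) Q := fun Q Q' _ _ v =>
    integrable_of_measurable_of_bound Q (measurable_quadErr Q' v u hF) fun x =>
      abs_quadErr_le Q' v u (ae_of_all _ (hA x)) fun i _ => hA x _
  have hinner : ∀ x, quadErr P (fun i => ∑ k, w k i) u (F x) =
      ∑ k', quadErr (P.restrict (D k')) (w k') u (F x) := fun x =>
    quadErr_eq_sum_restrict hDm hDd hDP w u (hFi x)
  rw [quadEnergy, quadErr_eq_sum_restrict hDm hDd hDP w u (hint P P _)]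
  refine Finset.sum_congr rfl fun k _ => ?_
  rw [funext hinner]
  exact quadErr_finsetSum _ _ _ fun k' _ => hint _ _ _

/-- Data sites of fill distance `h` carry weights whose energy is of the optimal order. -/
lemma exists_weights_quadEnergy_gammaMixKernel_le {U : Set (EuclideanSpace ℝ (Fin s))}
    (hU : Convex ℝ U) {x₀ : EuclideanSpace ℝ (Fin s)} {r₀ d : ℝ} (hr₀ : 0 < r₀)
    (hball : Metric.closedBall x₀ r₀ ⊆ U) (hd : ∀ x ∈ U, ‖x - x₀‖ ≤ d)
    (P : Measure (EuclideanSpace ℝ (Fin s))) [IsProbabilityMeasure P] (hPU : ∀ᵐ x ∂P, x ∈ U)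
    {C₁ : ℝ} (hC₁ : 0 ≤ C₁)
    (hP : ∀ S, 0 < S → ∀ x, ∫ y, gaussKernel S x y ∂P ≤ C₁ * S ^ ((s : ℝ) / 2))
    {ν : ℝ} (hν : 0 < ν) :
    ∃ h₀ > 0, ∃ C ≥ 0, ∀ h, 0 < h → h ≤ h₀ → ∀ (m : ℕ) (u : Fin m → EuclideanSpace ℝ (Fin s)),
      (∀ i, u i ∈ U) → (∀ v ∈ U, ∃ i, ‖v - u i‖ ≤ h) →
      ∃ w : Fin m → ℝ, quadEnergy P w u (gammaMixKernel ν 1) ≤ C * (h ^ 2) ^ (ν + (s : ℝ) / 2) := by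
  obtain ⟨κ, hκ⟩ := exists_nat_gt (ν + (s : ℝ) / 2)
  obtain ⟨h₀, hh₀, A, hA, R, hR, hrule⟩ := exists_isLocalRule (4 * κ) hU hr₀ hball hd
  set K₀ := (1 + A) ^ 2 * ((2 * κ).factorial * Real.exp (40 * R ^ 2)) with hK₀
  set K := K₀ * (Real.exp 2 * (C₁ * 4 ^ ((s : ℝ) / 2))) with hK
  have hK₀0 : 0 ≤ K₀ := by positivity
  have hK0 : 0 ≤ K := by positivity
  have hΓ := Real.Gamma_pos_of_pos hν
  have hκ' : 0 < (κ : ℝ) - (ν + (s : ℝ) / 2) := by linarith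
  refine ⟨h₀, hh₀, K / Real.Gamma ν * (1 / ν + 1 / (κ - (ν + (s : ℝ) / 2))), by positivity,
    fun h hh hhh₀ m u hu hcov => ?_⟩
  set D : Fin m → Set (EuclideanSpace ℝ (Fin s)) :=
    disjointed fun i => Metric.closedBall (u i) h with hD
  have hDsub : ∀ i, D i ⊆ Metric.closedBall (u i) h := fun i => disjointed_subset _ i
  have hDm : ∀ i, MeasurableSet (D i) := fun i =>
    disjointedRec (fun _ _ ht => ht.diff measurableSet_closedBall) measurableSet_closedBall
  have hDd : Pairwise (Function.onFun Disjoint D) := disjoint_disjointed _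
  have hDP : ∀ᵐ x ∂P, x ∈ ⋃ i, D i := by
    filter_upwards [hPU] with x hx
    rw [hD, iUnion_disjointed, Set.mem_iUnion]
    obtain ⟨i, hi⟩ := hcov x hx
    exact ⟨i, by rwa [Metric.mem_closedBall, dist_eq_norm]⟩
  choose w hw using fun i => hrule h hh hhh₀ m u hcov (P.restrict (D i)) (u i) (hu i) (by
    filter_upwards [ae_restrict_mem (hDm i)] with x hx
    simpa [dist_eq_norm] using hDsub i hx)
  refine ⟨fun i => ∑ k, w k i, ?_⟩
  rw [quadEnergy_gammaMixKernel P _ u hν one_pos]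
  refine integral_gamma_density_mul_le hν hκ (by positivity) hK0
    (measurable_quadEnergy_gaussKernel P _ u) (fun σ hσ => abs_quadEnergy_gaussKernel_le P _ u hσ)
    fun σ hσ => ?_
  rw [quadEnergy_eq_sum_restrict hDm hDd hDP w u
    (show Measurable (Function.uncurry (gaussKernel σ : EuclideanSpace ℝ (Fin s) → _ → ℝ)) by
      unfold gaussKernel Function.uncurry; fun_prop) (abs_gaussKernel_le_one hσ)]
  set S := max σ (h ^ 2) with hS
  have hS0 : 0 < S := lt_max_of_lt_left hσ
  have hSh : h ^ 2 ≤ S := le_max_right _ _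
  have hmass : ∑ i, (P.restrict (D i)).real Set.univ = 1 := by
    have h1 : ∫ _x, (1 : ℝ) ∂P = ∑ k, ∫ _x in D k, (1 : ℝ) ∂P := by
      rw [← integral_iUnion_fintype hDm hDd fun k => (integrable_const 1).integrableOn,
        Measure.restrict_eq_self_of_ae_mem hDP]
    simpa using h1.symm
  have hrow : ∀ i, ∑ j, (P.restrict (D j)).real Set.univ *
      Real.exp (-(‖u i - u j‖ ^ 2 / (2 * S))) ≤
      Real.exp 2 * (C₁ * 4 ^ ((s : ℝ) / 2)) * S ^ ((s : ℝ) / 2) := by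
    intro i
    have hgi : Integrable (gaussKernel (4 * S) (u i)) P :=
      integrable_of_measurable_of_bound P (by unfold gaussKernel; fun_prop)
        fun y => abs_gaussKernel_le_one (by positivity) _ y
    have h1 : ∀ j, (P.restrict (D j)).real Set.univ * Real.exp (-(‖u i - u j‖ ^ 2 / (2 * S))) ≤
        ∫ y in D j, Real.exp 2 * gaussKernel (4 * S) (u i) y ∂P := by
      intro j
      have h2 : (P.restrict (D j)).real Set.univ * Real.exp (-(‖u i - u j‖ ^ 2 / (2 * S))) =
          ∫ _y in D j, Real.exp (-(‖u i - u j‖ ^ 2 / (2 * S))) ∂P := by simp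
      rw [h2]
      refine setIntegral_mono_on (integrable_const _).integrableOn
        (hgi.const_mul _).integrableOn (hDm j) fun y hy => ?_
      rw [gaussKernel, ← Real.exp_add, Real.exp_le_exp]
      have h3 : ‖y - u j‖ ≤ h := by simpa [dist_eq_norm] using hDsub j hy
      have h4 : ‖u i - y‖ ≤ ‖u i - u j‖ + h := by
        have := norm_sub_le_norm_sub_add_norm_sub (u i) (u j) y
        rw [norm_sub_rev (u j) y] at this
        linarith
      have h5 : ‖u i - y‖ ^ 2 ≤ 2 * ‖u i - u j‖ ^ 2 + 2 * S := by
        have : ‖u i - y‖ ^ 2 ≤ (‖u i - u j‖ + h) ^ 2 := pow_le_pow_left₀ (norm_nonneg _) h4 2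
        nlinarith [sq_nonneg (‖u i - u j‖ - h)]
      have h6 : ‖u i - y‖ ^ 2 / (4 * S) ≤ 2 + ‖u i - u j‖ ^ 2 / (2 * S) := by
        rw [div_le_iff₀ (by positivity)]
        have : (2 + ‖u i - u j‖ ^ 2 / (2 * S)) * (4 * S) = 8 * S + 2 * ‖u i - u j‖ ^ 2 := by
          field_simp
          ring
        rw [this]
        linarith
      linarith
    refine (Finset.sum_le_sum fun j _ => h1 j).trans ?_
    rw [← integral_iUnion_fintype hDm hDd fun k => (hgi.const_mul _).integrableOn,
      Measure.restrict_eq_self_of_ae_mem hDP, integral_const_mul, mul_assoc, mul_assoc,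
      ← Real.mul_rpow (by norm_num) hS0.le]
    exact mul_le_mul_of_nonneg_left (hP (4 * S) (by positivity) (u i)) (Real.exp_pos _).le
  calc ∑ k, ∑ k', quadErr (P.restrict (D k)) (w k) u (fun x =>
        quadErr (P.restrict (D k')) (w k') u (fun y => gaussKernel σ x y))
      ≤ ∑ k, ∑ k', K₀ * (h ^ 2 / S) ^ κ * ((P.restrict (D k)).real Set.univ *
          ((P.restrict (D k')).real Set.univ * Real.exp (-(‖u k - u k'‖ ^ 2 / (2 * S))))) :=
        Finset.sum_le_sum fun k _ => Finset.sum_le_sum fun k' _ =>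
          (le_abs_self _).trans (abs_quadErr_quadErr_gaussKernel_le hR hh hσ (hw k) (hw k'))
    _ = K₀ * (h ^ 2 / S) ^ κ * ∑ k, (P.restrict (D k)).real Set.univ *
          ∑ k', (P.restrict (D k')).real Set.univ * Real.exp (-(‖u k - u k'‖ ^ 2 / (2 * S))) := by
        simp only [Finset.mul_sum]
    _ ≤ K₀ * (h ^ 2 / S) ^ κ * ∑ k, (P.restrict (D k)).real Set.univ *
          (Real.exp 2 * (C₁ * 4 ^ ((s : ℝ) / 2)) * S ^ ((s : ℝ) / 2)) := by
        gcongr with k _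
        exact hrow k
    _ = K * ((h ^ 2 / S) ^ κ * S ^ ((s : ℝ) / 2)) := by
        rw [← Finset.sum_mul, hmass, hK]
        ring

end Energy

section RKHSError

/-- In a reproducing kernel Hilbert space with bounded continuous kernel, quadrature errors are
controlled by the energy of the kernel. -/
lemma abs_quadErr_le_of_hasReproducingKernel {X ι : Type*} [TopologicalSpace X]
    [SecondCountableTopology X] [MeasurableSpace X] [BorelSpace X] [Fintype ι]
    {H : Type*} [NormedAddCommGroup H] [InnerProductSpace ℝ H] [CompleteSpace H] [RKHS ℝ H X ℝ]
    {c : X → X → ℝ} (hH : HasReproducingKernel H c) (hc : Continuous fun p : X × X => c p.1 p.2)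
    {A : ℝ} (hA : ∀ x, c x x ≤ A) (P : Measure X) [IsFiniteMeasure P] (w : ι → ℝ) (u : ι → X)
    (f : H) :
    Integrable (fun x => f x) P ∧ quadErr P w u f ^ 2 ≤ ‖f‖ ^ 2 * quadEnergy P w u c := by
  set φ : X → H := fun x => RKHS.kerFun H x (1 : ℝ) with hφ
  have hφf : ∀ x (g : H), inner ℝ (φ x) g = g x := fun x g => by
    simp [hφ]
  have hφφ : ∀ x y, inner ℝ (φ x) (φ y) = c x y := fun x y => by
    rw [hφf, hφ, RKHS.kerFun_apply, hH]
  have hsymm : ∀ x y, c x y = c y x := fun x y => by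
    rw [← hφφ, ← hφφ, real_inner_comm]
  have hφn : ∀ x, ‖φ x‖ ^ 2 = c x x := fun x => by rw [← hφφ, real_inner_self_eq_norm_sq]
  have hφc : Continuous φ := by
    rw [continuous_iff_continuousAt]
    intro x
    rw [ContinuousAt, tendsto_iff_norm_sub_tendsto_zero]
    have h1 : ∀ y, ‖φ y - φ x‖ = Real.sqrt (c y y - 2 * c y x + c x x) := fun y => by
      rw [← Real.sqrt_sq (norm_nonneg (φ y - φ x)), norm_sub_sq_real, hφn, hφn, hφφ]
    simp only [h1]
    have h2 : Continuous fun y => Real.sqrt (c y y - 2 * c y x + c x x) := by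
      have e1 : Continuous fun y => c y y := hc.comp (continuous_id.prodMk continuous_id)
      have e2 : Continuous fun y => c y x := hc.comp (continuous_id.prodMk continuous_const)
      fun_prop
    have h3 := h2.tendsto x
    rwa [show c x x - 2 * c x x + c x x = 0 by ring, Real.sqrt_zero] at h3
  have hφi : Integrable φ P := by
    refine Integrable.of_bound hφc.aestronglyMeasurable (Real.sqrt A) (ae_of_all _ fun x => ?_)
    refine Real.le_sqrt_of_sq_le ?_
    rw [hφn]
    exact hA x
  set Φ : H := ∫ x, φ x ∂P - ∑ i, w i • φ (u i) with hΦ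
  have hΦf : ∀ g : H, inner ℝ g Φ = quadErr P w u g := fun g => by
    rw [hΦ, inner_sub_right, ← integral_inner hφi, inner_sum, quadErr]
    simp only [real_inner_comm _ g, real_inner_smul_left, hφf]
  have hΦx : ∀ x, Φ x = quadErr P w u (c x) := fun x => by
    rw [← hφf, hΦf]
    congr 1
    funext y
    rw [← hφf, hφφ, hsymm]
  have hΦn : ‖Φ‖ ^ 2 = quadEnergy P w u c := by
    rw [← real_inner_self_eq_norm_sq, hΦf, quadEnergy]
    congr 1
    funext x
    exact hΦx x
  constructor
  · have := hφi.inner_const (𝕜 := ℝ) f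
    simpa only [hφf] using this
  · rw [← hΦf, ← hΦn, ← mul_pow, sq_le_sq, abs_of_nonneg (a := ‖f‖ * ‖Φ‖) (by positivity)]
    exact abs_real_inner_le_norm f Φ

end RKHSError

section Transfer

variable {s : ℕ} {U : Set (EuclideanSpace ℝ (Fin s))} {ι : Type*} [Fintype ι]

lemma quadErr_map_subtype_val (hU : MeasurableSet U) (P : Measure U) (w : ι → ℝ) (u : ι → U)
    (g : EuclideanSpace ℝ (Fin s) → ℝ) :
    quadErr (P.map Subtype.val) w (fun i => (u i : EuclideanSpace ℝ (Fin s))) g =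
      quadErr P w u fun x => g x := by
  rw [quadErr, (MeasurableEmbedding.subtype_coe hU).integral_map, quadErr]

lemma quadEnergy_maternKernelOn (hU : MeasurableSet U) (P : Measure U) (w : ι → ℝ) (u : ι → U)
    {ν η l : ℝ} (hν : 0 < ν) (hl : 0 < l) :
    quadEnergy P w u (maternKernelOn U ν η l) =
      η * quadEnergy (P.map Subtype.val) w (fun i => (u i : EuclideanSpace ℝ (Fin s)))
        (gammaMixKernel ν (ν / (2 * l ^ 2))) := by
  have h : maternKernelOn U ν η l = fun x y : U => η * gammaMixKernel ν (ν / (2 * l ^ 2))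
      (x : EuclideanSpace ℝ (Fin s)) (y : EuclideanSpace ℝ (Fin s)) :=
    funext fun x => funext fun y => maternKernel_eq_gammaMixKernel hν hl _ _
  rw [h, quadEnergy_const_mul, quadEnergy, quadEnergy, quadErr_map_subtype_val hU]
  simp only [quadErr_map_subtype_val hU]

/-- The Gaussian means of a measure with bounded density. -/
lemma integral_gaussKernel_le_of_density_le (hU : MeasurableSet U) {P : Measure U} {p : U → ℝ}
    {C : ℝ} (hC : 0 < C) (hp : ∀ v, p v ∈ Set.Icc (0 : ℝ) C)
    (hP : P = (Measure.comap ((↑) : U → EuclideanSpace ℝ (Fin s)) volume).withDensity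
      fun v => ENNReal.ofReal (p v)) {S : ℝ} (hS : 0 < S) (x : EuclideanSpace ℝ (Fin s)) :
    ∫ y, gaussKernel S x y ∂(P.map Subtype.val) ≤
      C * Real.pi ^ ((s : ℝ) / 2) * S ^ ((s : ℝ) / 2) := by
  have hle : P.map Subtype.val ≤
      ENNReal.ofReal C • (volume : Measure (EuclideanSpace ℝ (Fin s))) := by
    have h1 : P ≤ ENNReal.ofReal C •
        (Measure.comap ((↑) : U → EuclideanSpace ℝ (Fin s)) volume) := by
      rw [hP, ← withDensity_const]
      exact withDensity_mono (ae_of_all _ fun v => ENNReal.ofReal_le_ofReal (hp v).2)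
    refine (Measure.map_mono h1 measurable_subtype_coe).trans ?_
    rw [Measure.map_smul, map_comap_subtype_coe hU]
    gcongr
    exact Measure.restrict_le_self
  have hpi := Real.pi_pos
  have he : ∀ y, gaussKernel S x y = Real.exp (-S⁻¹ * ‖x - y‖ ^ 2) := fun y => by
    rw [gaussKernel]; congr 1; ring
  have hint : Integrable (gaussKernel S x) (volume : Measure (EuclideanSpace ℝ (Fin s))) := by
    have := (integrable_exp_neg_mul_norm_sq (E := EuclideanSpace ℝ (Fin s))
      (inv_pos.2 hS)).comp_sub_left x
    refine this.congr (ae_of_all _ fun y => ?_)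
    simp only [he, neg_mul]
  have hval : ∫ y, gaussKernel S x y = Real.pi ^ ((s : ℝ) / 2) * S ^ ((s : ℝ) / 2) := by
    simp only [he]
    rw [integral_sub_left_eq_self fun z : EuclideanSpace ℝ (Fin s) => Real.exp (-S⁻¹ * ‖z‖ ^ 2),
      GaussianFourier.integral_rexp_neg_mul_sq_norm (inv_pos.2 hS), div_inv_eq_mul,
      finrank_euclideanSpace_fin, Real.mul_rpow hpi.le hS.le]
  refine (integral_mono_measure hle (ae_of_all _ fun y => (Real.exp_pos _).le :
      0 ≤ᵐ[_] gaussKernel S x)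
    (hint.smul_measure ENNReal.ofReal_ne_top)).trans (le_of_eq ?_)
  rw [integral_smul_measure, hval, ENNReal.toReal_ofReal hC.le, smul_eq_mul, mul_assoc]

lemma measurable_gammaMixKernel {ν a : ℝ} (hν : 0 < ν) (ha : 0 < a) :
    Measurable (Function.uncurry (gammaMixKernel ν a : EuclideanSpace ℝ (Fin s) → _ → ℝ)) :=
  (continuous_gammaMixKernel hν ha).measurable

/-- The optimal weights integrate the kernel sections at the nodes exactly. -/
lemma quadErr_optimalWeights_eq_zero (hU : MeasurableSet U) (P : Measure U) {m : ℕ}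
    {u : Fin m → U} (hu : Function.Injective u) {ν η l : ℝ} (hν : 0 < ν) (hη : 0 < η)
    (hl : 0 < l) (i : Fin m) :
    quadErr (P.map Subtype.val) (optimalWeights (maternKernelOn U ν η l) P u)
      (fun i => (u i : EuclideanSpace ℝ (Fin s)))
      (gammaMixKernel ν (ν / (2 * l ^ 2)) (u i : EuclideanSpace ℝ (Fin s))) = 0 := by
  have ha : 0 < ν / (2 * l ^ 2) := by positivity
  set C : Matrix (Fin m) (Fin m) ℝ :=
    Matrix.of fun i j => maternKernelOn U ν η l (u i) (u j) with hC
  have hk : ∀ x y : U, maternKernelOn U ν η l x y = η * gammaMixKernel ν (ν / (2 * l ^ 2))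
      (x : EuclideanSpace ℝ (Fin s)) (y : EuclideanSpace ℝ (Fin s)) :=
    fun x y => maternKernel_eq_gammaMixKernel hν hl _ _
  have hdet : C.det ≠ 0 := by
    intro h0
    obtain ⟨v, hv0, hv⟩ := Matrix.exists_mulVec_eq_zero_iff.2 h0
    have hpos := quadEnergy_zero_gammaMixKernel_pos v
      (fun i => (u i : EuclideanSpace ℝ (Fin s))) hν ha (Subtype.val_injective.comp hu) hv0
    rw [quadEnergy_zero_measure] at hpos
    refine hpos.ne' (Finset.sum_eq_zero fun i _ => ?_)
    have h1 := congr_fun hv i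
    simp only [hC, Matrix.mulVec, dotProduct, Matrix.of_apply, Pi.zero_apply, hk, mul_assoc,
      ← Finset.mul_sum] at h1
    have h2 := (mul_eq_zero.1 h1).resolve_left hη.ne'
    simp only [mul_comm (v _)]
    rw [h2, zero_mul]
  have hsol : C.mulVec (optimalWeights (maternKernelOn U ν η l) P u) =
      fun i => ∫ v, maternKernelOn U ν η l (u i) v ∂P := by
    rw [optimalWeights, ← hC, Matrix.mulVec_mulVec,
      Matrix.mul_nonsing_inv _ (isUnit_iff_ne_zero.2 hdet), Matrix.one_mulVec]
  have h1 := congr_fun hsol i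
  simp only [hC, Matrix.mulVec, dotProduct, Matrix.of_apply, hk, mul_assoc, integral_const_mul,
    ← Finset.mul_sum] at h1
  have h2 := mul_left_cancel₀ hη.ne' h1
  rw [quadErr_map_subtype_val hU, quadErr, ← h2, sub_eq_zero]
  exact Finset.sum_congr rfl fun j _ => mul_comm _ _

lemma exists_norm_sub_le_of_fillDistance_le (hU : Bornology.IsBounded U) {m : ℕ} (hm : 0 < m)
    {u : Fin m → U} {h : ℝ} (hh : fillDistance U u ≤ h) {v : EuclideanSpace ℝ (Fin s)}
    (hv : v ∈ U) : ∃ i, ‖v - u i‖ ≤ h := by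
  have : Nonempty (Fin m) := ⟨⟨0, hm⟩⟩
  obtain ⟨d, hd⟩ := hU.exists_norm_le
  have hbdd : BddAbove (Set.range fun v : U => ⨅ i : Fin m,
      ‖(v : EuclideanSpace ℝ (Fin s)) - (u i : EuclideanSpace ℝ (Fin s))‖) := by
    refine ⟨d + d, ?_⟩
    rintro _ ⟨v, rfl⟩
    refine (ciInf_le (Set.finite_range _).bddBelow ⟨0, hm⟩).trans ((norm_sub_le _ _).trans ?_)
    exact add_le_add (hd _ v.2) (hd _ (u _).2)
  obtain ⟨i, hi⟩ := exists_eq_ciInf_of_finite (f := fun i : Fin m => ‖v - u i‖)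
  refine ⟨i, hi.le.trans (le_trans ?_ hh)⟩
  exact le_ciSup hbdd ⟨v, hv⟩

end Transfer

section Main

variable {s : ℕ}

lemma rpow_add_rpow_le_of_mem_Icc {lo hi a b p q : ℝ} (hlo : 0 < lo) (ha : a ∈ Set.Icc lo hi)
    (hb : b ∈ Set.Icc lo hi) (hp : 0 ≤ p) (hq : 0 ≤ q) :
    (a / b) ^ p + (b / a) ^ q ≤ (hi / lo) ^ p + (hi / lo) ^ q := by
  have ha0 : 0 < a := hlo.trans_le ha.1
  have hb0 : 0 < b := hlo.trans_le hb.1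
  have hhi : 0 ≤ hi := ha0.le.trans ha.2
  have h1 : a / b ≤ hi / lo := div_le_div₀ hhi ha.2 hlo hb.1
  have h2 : b / a ≤ hi / lo := div_le_div₀ hhi hb.2 hlo ha.1
  gcongr

lemma quadEnergy_gammaMixKernel_zero_weights_le {ι : Type*} [Fintype ι]
    (P : Measure (EuclideanSpace ℝ (Fin s))) [IsProbabilityMeasure P]
    (u : ι → EuclideanSpace ℝ (Fin s)) {ν a : ℝ} (hν : 0 < ν) (ha : 0 < a) :
    quadEnergy P (0 : ι → ℝ) u (gammaMixKernel ν a) ≤ 1 := by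
  have h : ∀ x, |quadErr P (0 : ι → ℝ) u (gammaMixKernel ν a x)| ≤ 1 := fun x => by
    simpa using abs_quadErr_le P (0 : ι → ℝ) u (A := 1)
      (ae_of_all _ fun y => abs_gammaMixKernel_le_one hν ha x y) (fun i hi => (hi rfl).elim)
  have := abs_quadErr_le P (0 : ι → ℝ) u (A := 1) (ae_of_all _ h) (fun i hi => (hi rfl).elim)
  simp only [Pi.zero_apply, abs_zero, Finset.sum_const_zero, probReal_univ, add_zero,
    mul_one] at this
  exact (le_abs_self _).trans this

/-- For quasi-uniform data sites there are weights whose energy is of the optimal order. -/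
lemma exists_weights_quadEnergy_le_of_fillDistance (hs : 0 < s)
    {U : Set (EuclideanSpace ℝ (Fin s))}
    (hU_conv : Convex ℝ U) (hU_open : IsOpen U) (hU_bdd : Bornology.IsBounded U)
    (P : Measure U) [IsProbabilityMeasure P] {p : U → ℝ} {C : ℝ} (hC : 0 < C)
    (hp : ∀ v, p v ∈ Set.Icc (0 : ℝ) C)
    (hP : P = (Measure.comap ((↑) : U → EuclideanSpace ℝ (Fin s)) volume).withDensity
      fun v => ENNReal.ofReal (p v))
    (u : (m : ℕ) → Fin m → U)
    (hfill : (fun m : ℕ => fillDistance U (u m)) =O[atTop]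
      fun m : ℕ => (m : ℝ) ^ (-(1 : ℝ) / s))
    {ν : ℝ} (hν : 0 < ν) :
    ∃ K ≥ 0, ∀ m : ℕ, 0 < m → ∃ w : Fin m → ℝ,
      quadEnergy (P.map Subtype.val) w (fun i => (u m i : EuclideanSpace ℝ (Fin s)))
        (gammaMixKernel ν 1) ≤ K * ((m : ℝ) ^ (-(ν / s) - 1 / 2)) ^ 2 := by
  have hUm := hU_open.measurableSet
  have hPm : IsProbabilityMeasure (P.map (Subtype.val : U → EuclideanSpace ℝ (Fin s))) :=
    Measure.isProbabilityMeasure_map measurable_subtype_coe.aemeasurable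
  have hs' : (0 : ℝ) < s := by exact_mod_cast hs
  obtain ⟨x₀⟩ : Nonempty U := nonempty_of_isProbabilityMeasure P
  obtain ⟨r₀, hr₀, hball⟩ := Metric.nhds_basis_closedBall.mem_iff.1 (hU_open.mem_nhds x₀.2)
  obtain ⟨d, hd⟩ := hU_bdd.exists_norm_le
  have hd' : ∀ x ∈ U, ‖x - x₀‖ ≤ d + d := fun x hx =>
    (norm_sub_le _ _).trans (add_le_add (hd x hx) (hd _ x₀.2))
  have hPU : ∀ᵐ x ∂(P.map (Subtype.val : U → EuclideanSpace ℝ (Fin s))), x ∈ U := by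
    exact (ae_map_iff measurable_subtype_coe.aemeasurable (p := fun x => x ∈ U) hUm).2
      (ae_of_all _ fun v => v.2)
  have hpi := Real.pi_pos
  obtain ⟨h₀, hh₀, K, hK, hw⟩ := exists_weights_quadEnergy_gammaMixKernel_le hU_conv hr₀ hball hd'
    (P.map Subtype.val) hPU (C₁ := C * Real.pi ^ ((s : ℝ) / 2)) (by positivity)
    (fun S hS x => integral_gaussKernel_le_of_density_le hUm hC hp hP hS x) hν
  obtain ⟨c₀, hc₀, hfill⟩ := hfill.exists_pos
  have hlim : Tendsto (fun m : ℕ => c₀ * (m : ℝ) ^ (-(1 : ℝ) / s)) atTop (nhds 0) := by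
    have := (tendsto_rpow_neg_atTop (y := 1 / (s : ℝ)) (by positivity)).comp
      tendsto_natCast_atTop_atTop
    simpa [neg_div] using this.const_mul c₀
  obtain ⟨m₁, hm₁⟩ := eventually_atTop.1 (hfill.bound.and (hlim.eventually (gt_mem_nhds hh₀)))
  refine ⟨((m₁ : ℝ) ^ (ν / s + 1 / 2)) ^ 2 + K * (c₀ ^ 2) ^ (ν + (s : ℝ) / 2), by positivity,
    fun m hm => ?_⟩
  have hm' : (0 : ℝ) < m := by exact_mod_cast hm
  rw [add_mul]
  rcases le_total m₁ m with hle | hle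
  · obtain ⟨hb, hsmall⟩ := hm₁ m hle
    set h := c₀ * (m : ℝ) ^ (-(1 : ℝ) / s) with hh
    have hh0 : 0 < h := by positivity
    have hfd : fillDistance U (u m) ≤ h := by
      refine (le_abs_self _).trans (hb.trans (le_of_eq ?_))
      rw [Real.norm_of_nonneg (by positivity)]
    obtain ⟨w, hw⟩ := hw h hh0 hsmall.le m (fun i => u m i) (fun i => (u m i).2)
      fun v hv => exists_norm_sub_le_of_fillDistance_le hU_bdd hm hfd hv
    refine ⟨w, hw.trans ?_⟩
    have hpow : (h ^ 2) ^ (ν + (s : ℝ) / 2) =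
        (c₀ ^ 2) ^ (ν + (s : ℝ) / 2) * ((m : ℝ) ^ (-(ν / s) - 1 / 2)) ^ 2 := by
      rw [hh, mul_pow, Real.mul_rpow (by positivity) (by positivity)]
      congr 1
      rw [← Real.rpow_natCast, ← Real.rpow_natCast, ← Real.rpow_mul hm'.le,
        ← Real.rpow_mul hm'.le, ← Real.rpow_mul hm'.le]
      congr 1
      push_cast
      field_simp
      ring
    rw [hpow, ← mul_assoc]
    have : 0 ≤ ((m₁ : ℝ) ^ (ν / s + 1 / 2)) ^ 2 * ((m : ℝ) ^ (-(ν / s) - 1 / 2)) ^ 2 := by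
      positivity
    linarith
  · refine ⟨0, (quadEnergy_gammaMixKernel_zero_weights_le _ _ hν one_pos).trans ?_⟩
    have h1 : 1 ≤ (m₁ : ℝ) ^ (ν / s + 1 / 2) * (m : ℝ) ^ (-(ν / s) - 1 / 2) := by
      have h2 : (m : ℝ) ^ (ν / s + 1 / 2) ≤ (m₁ : ℝ) ^ (ν / s + 1 / 2) :=
        Real.rpow_le_rpow hm'.le (by exact_mod_cast hle) (by positivity)
      have h3 : (m : ℝ) ^ (ν / s + 1 / 2) * (m : ℝ) ^ (-(ν / s) - 1 / 2) = 1 := by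
        rw [← Real.rpow_add hm']
        ring_nf
        exact Real.rpow_zero _
      exact h3.ge.trans (mul_le_mul_of_nonneg_right h2 (by positivity))
    have h4 : 1 ≤ ((m₁ : ℝ) ^ (ν / s + 1 / 2)) ^ 2 * ((m : ℝ) ^ (-(ν / s) - 1 / 2)) ^ 2 := by
      rw [← mul_pow]
      exact one_le_pow₀ h1
    have h5 : 0 ≤ K * (c₀ ^ 2) ^ (ν + (s : ℝ) / 2) * ((m : ℝ) ^ (-(ν / s) - 1 / 2)) ^ 2 := by
      positivity
    linarith

end Main

theorem bq_optimal_weights_convergence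
    {s : ℕ} (hs : 0 < s)
    (U : Set (EuclideanSpace ℝ (Fin s)))
    (hU_conv : Convex ℝ U) (hU_open : IsOpen U) (hU_bdd : Bornology.IsBounded U)
    -- the probability measure on `U` and its bounded density
    (𝕌 : Measure U) [IsProbabilityMeasure 𝕌]
    (f𝕌 : U → ℝ) (hf𝕌_meas : Measurable f𝕌)
    (C𝕌' : ℝ) (hC𝕌' : 0 < C𝕌') (hf𝕌 : ∀ v, f𝕌 v ∈ Set.Icc (0 : ℝ) C𝕌')
    (h𝕌 : 𝕌 = (Measure.comap ((↑) : U → EuclideanSpace ℝ (Fin s)) volume).withDensity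
      fun v => ENNReal.ofReal (f𝕌 v))
    -- for every `m ≥ M`, a set of `m` points with fill distance `O(m^(-1/s))`
    (M : ℕ) (hM : 0 < M)
    (u : (m : ℕ) → Fin m → U)
    (hu_inj : ∀ m, M ≤ m → Function.Injective (u m))
    (hfill : (fun m : ℕ => fillDistance U (u m)) =O[atTop]
      fun m : ℕ => (m : ℝ) ^ (-(1 : ℝ) / s))
    -- the family of Matérn kernels of order `νc` and the parameters `β m` that are used
    (νc : ℝ) (hνc : 0 < νc)
    {B : Type*} (η ℓ : B → ℝ)
    (ηmax : ℝ) (hη : ∀ b, 0 < η b ∧ η b ≤ ηmax)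
    (ℓmin ℓmax : ℝ) (hℓmin : 0 < ℓmin) (hℓ : ∀ b, ℓ b ∈ Set.Icc ℓmin ℓmax)
    (β : ℕ → B) :
    ∃ C₀ : ℝ, ∀ m, M ≤ m → ∀ b : B,
      ∀ (H : Type*) [NormedAddCommGroup H] [InnerProductSpace ℝ H] [CompleteSpace H]
        [RKHS ℝ H U ℝ], HasReproducingKernel H (maternKernelOn U νc (η b) (ℓ b)) →
      ∀ f : H, ‖f‖ = 1 →
        Integrable (fun v => f v) 𝕌 ∧
        |(∫ v, f v ∂𝕌) -
            ∑ i, optimalWeights (maternKernelOn U νc (η (β m)) (ℓ (β m))) 𝕌 (u m) i * f (u m i)| ≤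
          C₀ * (m : ℝ) ^ (-(νc / s) - 1 / 2) := by

  have hUm := hU_open.measurableSet
  have hPm : IsProbabilityMeasure (𝕌.map (Subtype.val : U → EuclideanSpace ℝ (Fin s))) :=
    Measure.isProbabilityMeasure_map measurable_subtype_coe.aemeasurable
  have hηmax : 0 < ηmax := (hη (β 0)).1.trans_le (hη (β 0)).2
  have hℓ0 : ∀ b, 0 < ℓ b := fun b => hℓmin.trans_le (hℓ b).1
  have hℓmax : 0 < ℓmax := (hℓ0 (β 0)).trans_le (hℓ (β 0)).2
  obtain ⟨K, hK, hw⟩ := exists_weights_quadEnergy_le_of_fillDistance hs hU_conv hU_open hU_bdd 𝕌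
    hC𝕌' hf𝕌 h𝕌 u hfill hνc
  set a : B → ℝ := fun b => νc / (2 * ℓ b ^ 2) with ha
  have ha0 : ∀ b, 0 < a b := fun b => by have := hℓ0 b; positivity
  set lo : ℝ := min (νc / (2 * ℓmax ^ 2)) 1 with hlo
  set hi : ℝ := max (νc / (2 * ℓmin ^ 2)) 1 with hhi
  have hlo0 : 0 < lo := lt_min (by positivity) one_pos
  have haI : ∀ b, a b ∈ Set.Icc lo hi := fun b => by
    have h0 := hℓ0 b
    obtain ⟨h1, h2⟩ := hℓ b
    refine ⟨(min_le_left _ _).trans ?_, le_trans ?_ (le_max_left _ _)⟩ <;>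
      simp only [ha] <;> gcongr
  have h1I : (1 : ℝ) ∈ Set.Icc lo hi := ⟨min_le_right _ _, le_max_right _ _⟩
  set F : ℝ := (hi / lo) ^ νc + (hi / lo) ^ ((s : ℝ) / 2) with hF
  have hhi0 : 0 < hi := lt_max_of_lt_right one_pos
  have hF0 : 0 ≤ F := by positivity
  have hcomp : ∀ (m : ℕ) (w : Fin m → ℝ) (v : Fin m → EuclideanSpace ℝ (Fin s)) (a b : ℝ),
      a ∈ Set.Icc lo hi → b ∈ Set.Icc lo hi →
      quadEnergy (𝕌.map Subtype.val) w v (gammaMixKernel νc a) ≤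
        F * quadEnergy (𝕌.map Subtype.val) w v (gammaMixKernel νc b) := by
    intro m w v a b ha hb
    have hb0 := hlo0.trans_le hb.1
    have h := quadEnergy_gammaMixKernel_le (𝕌.map Subtype.val) w v hνc (hlo0.trans_le ha.1) hb0
    rw [finrank_euclideanSpace_fin] at h
    refine h.trans (mul_le_mul_of_nonneg_right ?_
      (quadEnergy_gammaMixKernel_nonneg _ w v hνc hb0))
    exact rpow_add_rpow_le_of_mem_Icc hlo0 ha hb hνc.le (by positivity)
  refine ⟨Real.sqrt (ηmax * (F * (F * K))), fun m hm b H _ _ _ _ hH f hf => ?_⟩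
  have hm0 : 0 < m := hM.trans_le hm
  set w := optimalWeights (maternKernelOn U νc (η (β m)) (ℓ (β m))) 𝕌 (u m) with hwdef
  set v : Fin m → EuclideanSpace ℝ (Fin s) := fun i => u m i with hv
  obtain ⟨w', hw'⟩ := hw m hm0
  have hmin : quadEnergy (𝕌.map Subtype.val) w v (gammaMixKernel νc (a (β m))) ≤
      quadEnergy (𝕌.map Subtype.val) w' v (gammaMixKernel νc (a (β m))) := by
    rw [quadEnergy_eq_add_of_quadErr_eq_zero (𝕌.map Subtype.val) (w := w) w' v
      (measurable_gammaMixKernel hνc (ha0 _)) (abs_gammaMixKernel_le_one hνc (ha0 _))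
      (gammaMixKernel_comm νc _)
      (quadErr_optimalWeights_eq_zero hUm 𝕌 (hu_inj m hm) hνc (hη _).1 (hℓ0 _))]
    exact le_add_of_nonneg_right (quadEnergy_gammaMixKernel_nonneg 0 _ v hνc (ha0 _))
  have hEq : quadEnergy 𝕌 w (u m) (maternKernelOn U νc (η b) (ℓ b)) ≤
      ηmax * (F * (F * K)) * ((m : ℝ) ^ (-(νc / s) - 1 / 2)) ^ 2 := by
    rw [quadEnergy_maternKernelOn hUm 𝕌 w (u m) hνc (hℓ0 b)]
    calc η b * quadEnergy (𝕌.map Subtype.val) w v (gammaMixKernel νc (a b))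
        ≤ ηmax * quadEnergy (𝕌.map Subtype.val) w v (gammaMixKernel νc (a b)) :=
          mul_le_mul_of_nonneg_right (hη b).2 (quadEnergy_gammaMixKernel_nonneg _ w v hνc (ha0 b))
      _ ≤ ηmax * (F * quadEnergy (𝕌.map Subtype.val) w v (gammaMixKernel νc (a (β m)))) := by
          gcongr
          exact hcomp m w v _ _ (haI b) (haI (β m))
      _ ≤ ηmax * (F * quadEnergy (𝕌.map Subtype.val) w' v (gammaMixKernel νc (a (β m)))) := by
          gcongr
      _ ≤ ηmax * (F * (F * quadEnergy (𝕌.map Subtype.val) w' v (gammaMixKernel νc 1))) := by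
          gcongr
          exact hcomp m w' v _ _ (haI (β m)) h1I
      _ ≤ ηmax * (F * (F * (K * ((m : ℝ) ^ (-(νc / s) - 1 / 2)) ^ 2))) := by gcongr
      _ = _ := by ring
  have hcont : Continuous fun p : U × U => maternKernelOn U νc (η b) (ℓ b) p.1 p.2 := by
    simp only [maternKernelOn, maternKernel_eq_gammaMixKernel hνc (hℓ0 b)]
    exact continuous_const.mul ((continuous_gammaMixKernel hνc (ha0 b)).comp
      ((continuous_subtype_val.comp continuous_fst).prodMk
        (continuous_subtype_val.comp continuous_snd)))
  obtain ⟨hint, hsq⟩ := abs_quadErr_le_of_hasReproducingKernel hH hcont (A := η b)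
    (fun x => by simp [maternKernelOn, maternKernel]) 𝕌 w (u m) f
  refine ⟨hint, ?_⟩
  rw [hf, one_pow, one_mul] at hsq
  refine abs_le_of_sq_le_sq ?_ (by positivity)
  rw [mul_pow, Real.sq_sqrt (by positivity)]
  exact hsq.trans hEq
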